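/- arXiv:2111.10590 — 7 statements merged into one kernel-verified Lean document; each statement's English description precedes it below -/
import Mathlib

section
/- For every integer n > 8, the number of partitions of n with no part equal to 1 or 2 and more odd parts than even parts is strictly greater than the number of partitions of n with no part equal to 1 or 2 and more even parts than odd parts; that is, p_o^S(n) > p_e^S(n) for S = {1,2}. -/
/-- The number of odd parts of a partition, counted with multiplicity. -/
def Nat.Partition.oddCount {n : ℕ} (l : n.Partition) : ℕ :=
  (l.parts.filter (fun p => p % 2 = 1)).card

/-- The number of even parts of a partition, counted with multiplicity. -/
def Nat.Partition.evenCount {n : ℕ} (l : n.Partition) : ℕ :=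
  (l.parts.filter (fun p => p % 2 = 0)).card

/-!
Split a partition without parts `1` and `2` into its odd and its even parts. Those with `a` odd and
`b` even parts have generating function `q ^ (3 * a + 4 * b) * p a * p b`, where
`p n = 1 / ((1 - q ^ 2) ⋯ (1 - q ^ (2 * n)))`. Hence the difference of the two counts has generating
function `∑ (q ^ (3 * d) - q ^ (4 * d)) * F d` over `d ≥ 1`, where `F d` is the sum of
`q ^ (7 * b) * p b * p (b + d)` over all `b`.

A factor `1 - q ^ (2 * i)` with `i ≤ n` cancels against `p n`, and `(1 - q ^ 7) * F d` telescopes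
because `p b * p (b + d)` increases with `b`; together these make the coefficients of every term
with `d ≥ 6` nonnegative. The terms with `d = 1, 3, 5` have negative coefficients, but the five
terms with `d ≤ 5` together exceed a series with nonnegative coefficients by
`(q ^ 3 + q ^ 10) / (1 - q ^ 2) - q ^ 4 - q ^ 8`, whose coefficients are positive beyond `q ^ 8`.
-/

namespace ParityBias

open PowerSeries Finset
open scoped PowerSeries.WithPiTopology

section Nonneg

variable {R : Type*} [Semiring R] [PartialOrder R] [IsOrderedRing R]

variable (R) in
/-- The power series with nonnegative coefficients. -/
def nonnegCoeff : Subsemiring R⟦X⟧ where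
  carrier := {f | ∀ n, 0 ≤ coeff n f}
  mul_mem' hf hg n := by
    rw [coeff_mul]
    exact sum_nonneg fun _ _ => mul_nonneg (hf _) (hg _)
  one_mem' n := by
    rw [coeff_one]
    split_ifs <;> simp
  add_mem' hf hg n := by
    rw [map_add]
    exact add_nonneg (hf n) (hg n)
  zero_mem' n := by simp

lemma X_mem_nonnegCoeff : (X : R⟦X⟧) ∈ nonnegCoeff R := fun n => by
  rw [coeff_X]
  split_ifs <;> simp

lemma X_pow_mul_mem_nonnegCoeff (k : ℕ) {f : R⟦X⟧} (hf : f ∈ nonnegCoeff R) :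
    X ^ k * f ∈ nonnegCoeff R :=
  mul_mem (pow_mem X_mem_nonnegCoeff k) hf

end Nonneg

/-- The geometric series `1 + q ^ k + q ^ (2 * k) + ⋯`. -/
def geom (k : ℕ) : ℤ⟦X⟧ := PowerSeries.mk fun n => if k ∣ n then 1 else 0

lemma geom_mem_nonnegCoeff (k : ℕ) : geom k ∈ nonnegCoeff ℤ := fun n => by
  rw [geom, coeff_mk]
  split_ifs <;> simp

lemma one_sub_mul_geom {k : ℕ} (hk : 0 < k) : (1 - X ^ k) * geom k = 1 := by
  ext n
  rw [sub_mul, one_mul, map_sub, coeff_X_pow_mul', geom, coeff_mk, coeff_one]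
  rcases lt_or_ge n k with h | h
  · simp [h.not_ge, Nat.dvd_iff_mod_eq_zero, Nat.mod_eq_of_lt h]
  · have hdvd : k ∣ n - k ↔ k ∣ n := Nat.dvd_sub_iff_left h dvd_rfl
    simp [h, hdvd, (hk.trans_le h).ne']

/-- The reciprocal `1 / ((1 - q ^ 2) (1 - q ^ 4) ⋯ (1 - q ^ (2 * n)))`, the series usually written
`1 / (q ^ 2; q ^ 2)_n`. -/
noncomputable def p (n : ℕ) : ℤ⟦X⟧ := ∏ i ∈ range n, geom (2 * (i + 1))

lemma p_zero : p 0 = 1 := prod_range_zero _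

lemma one_sub_mul_p_succ (n : ℕ) : (1 - X ^ (2 * (n + 1))) * p (n + 1) = p n := by
  rw [p, prod_range_succ, mul_left_comm, one_sub_mul_geom (by lia), mul_one, p]

lemma p_one : p 1 = geom 2 := prod_range_one _

lemma p_mem_nonnegCoeff (n : ℕ) : p n ∈ nonnegCoeff ℤ :=
  prod_mem fun _ _ => geom_mem_nonnegCoeff _

lemma one_sub_mul_p_mem_nonnegCoeff {i n : ℕ} (h : i ≤ n) :
    (1 - X ^ (2 * i)) * p n ∈ nonnegCoeff ℤ := by
  rcases i with _ | i
  · simp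
  · rw [p, ← mul_prod_erase _ _ (mem_range.2 h), ← mul_assoc, one_sub_mul_geom (by lia), one_mul]
    exact prod_mem fun _ _ => geom_mem_nonnegCoeff _

lemma p_succ_sub_mem_nonnegCoeff (n : ℕ) : p (n + 1) - p n ∈ nonnegCoeff ℤ := by
  have h : p (n + 1) - p n = X ^ (2 * (n + 1)) * p (n + 1) := by
    linear_combination one_sub_mul_p_succ n
  rw [h]
  exact X_pow_mul_mem_nonnegCoeff _ (p_mem_nonnegCoeff _)

lemma p_mul_succ_sub (b d : ℕ) : p (b + 1) * p (b + 1 + d) - p b * p (b + d) =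
    X ^ (2 * (b + 1)) * (p (b + 1) * p (b + 1 + d)) +
      X ^ (2 * (b + 1 + d)) * (((1 - X ^ (2 * (b + 1))) * p (b + 1)) * p (b + 1 + d)) := by
  rw [← one_sub_mul_p_succ b, ← one_sub_mul_p_succ (b + d), add_right_comm b d 1]
  ring

lemma p_mul_succ_sub_mem_nonnegCoeff (b d : ℕ) :
    p (b + 1) * p (b + 1 + d) - p b * p (b + d) ∈ nonnegCoeff ℤ := by
  rw [p_mul_succ_sub]
  exact add_mem (X_pow_mul_mem_nonnegCoeff _ (mul_mem (p_mem_nonnegCoeff _) (p_mem_nonnegCoeff _)))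
    (X_pow_mul_mem_nonnegCoeff _
      (mul_mem (one_sub_mul_p_mem_nonnegCoeff le_rfl) (p_mem_nonnegCoeff _)))

lemma one_sub_mul_p_mul_succ_sub_mem_nonnegCoeff (b d : ℕ) :
    (1 - X ^ 2) * (p (b + 1) * p (b + 1 + d) - p b * p (b + d)) ∈ nonnegCoeff ℤ := by
  have h : (1 - X ^ 2) * (p (b + 1) * p (b + 1 + d) - p b * p (b + d)) =
      X ^ (2 * (b + 1)) * (((1 - X ^ (2 * 1)) * p (b + 1)) * p (b + 1 + d)) +
      X ^ (2 * (b + 1 + d)) *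
        (((1 - X ^ (2 * (b + 1))) * p (b + 1)) * ((1 - X ^ (2 * 1)) * p (b + 1 + d))) := by
    rw [p_mul_succ_sub]
    ring
  rw [h]
  exact add_mem
    (X_pow_mul_mem_nonnegCoeff _
      (mul_mem (one_sub_mul_p_mem_nonnegCoeff (by lia)) (p_mem_nonnegCoeff _)))
    (X_pow_mul_mem_nonnegCoeff _
      (mul_mem (one_sub_mul_p_mem_nonnegCoeff le_rfl) (one_sub_mul_p_mem_nonnegCoeff (by lia))))

/-- The sum `∑ q ^ (7 * b) * f b` over all `b`, where `7 = 3 + 4` is the least weight of an odd part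
together with an even part. -/
noncomputable def weightSum (f : ℕ → ℤ⟦X⟧) : ℤ⟦X⟧ := ∑' b, X ^ (7 * b) * f b

lemma summable_weightSum (f : ℕ → ℤ⟦X⟧) : Summable fun b => X ^ (7 * b) * f b := by
  refine WithPiTopology.summable_of_tendsto_order_atTop_nhds_top (R := ℤ) (ι := ℕ) ?_
  refine ENat.tendsto_nhds_top_iff_natCast_lt.2 fun n => ?_
  filter_upwards [Filter.eventually_gt_atTop n] with b hb
  calc (n : ℕ∞) < (7 * b : ℕ) := by exact_mod_cast (by lia : n < 7 * b)
    _ = (X ^ (7 * b) : ℤ⟦X⟧).order := (order_X_pow _).symm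
    _ ≤ _ := le_self_add.trans (le_order_mul ..)

lemma coeff_weightSum (f : ℕ → ℤ⟦X⟧) {n N : ℕ} (h : n < N) :
    coeff n (weightSum f) = ∑ b ∈ range N, coeff n (X ^ (7 * b) * f b) := by
  rw [weightSum, (summable_weightSum f).map_tsum (coeff n) (WithPiTopology.continuous_coeff ℤ n)]
  refine tsum_eq_sum fun b hb => ?_
  rw [coeff_X_pow_mul', if_neg (by simp only [mem_range] at hb; lia)]

lemma weightSum_mem_nonnegCoeff {f : ℕ → ℤ⟦X⟧} (h : ∀ b, f b ∈ nonnegCoeff ℤ) :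
    weightSum f ∈ nonnegCoeff ℤ := fun n => by
  rw [coeff_weightSum f n.lt_succ_self]
  exact sum_nonneg fun b _ => X_pow_mul_mem_nonnegCoeff _ (h b) n

lemma weightSum_add (f g : ℕ → ℤ⟦X⟧) :
    weightSum (fun b => f b + g b) = weightSum f + weightSum g := by
  simp only [weightSum, mul_add]
  exact (summable_weightSum f).tsum_add (summable_weightSum g)

lemma weightSum_sub (f g : ℕ → ℤ⟦X⟧) :
    weightSum (fun b => f b - g b) = weightSum f - weightSum g := by
  rw [eq_sub_iff_add_eq, ← weightSum_add]
  simp only [sub_add_cancel]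

lemma weightSum_const_mul (c : ℤ⟦X⟧) (f : ℕ → ℤ⟦X⟧) :
    weightSum (fun b => c * f b) = c * weightSum f := by
  simp only [weightSum, mul_left_comm _ c]
  exact (summable_weightSum f).tsum_mul_left c

lemma weightSum_eq_zero_add (f : ℕ → ℤ⟦X⟧) :
    weightSum f = f 0 + X ^ 7 * weightSum (fun b => f (b + 1)) := by
  rw [← weightSum_const_mul, weightSum, (summable_weightSum f).tsum_eq_zero_add, weightSum]
  congr 1
  · simp
  · exact tsum_congr fun b => by ring

/-- The series `∑ q ^ (7 * b) * p b * p (b + d)` over all `b`. Multiplied by `q ^ (3 * d)`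
(respectively `q ^ (4 * d)`) it counts the partitions without parts `1` and `2` having `d` more odd
than even (respectively even than odd) parts. -/
noncomputable def F (d : ℕ) : ℤ⟦X⟧ := weightSum fun b => p b * p (b + d)

lemma one_sub_mul_F_mem_nonnegCoeff {i d : ℕ} (h : i ≤ d) :
    (1 - X ^ (2 * i)) * F d ∈ nonnegCoeff ℤ := by
  rw [F, ← weightSum_const_mul]
  simp only [mul_left_comm _ (p _)]
  exact weightSum_mem_nonnegCoeff fun b =>
    mul_mem (p_mem_nonnegCoeff b) (one_sub_mul_p_mem_nonnegCoeff (by lia))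

lemma one_sub_X_pow_seven_mul_F_mem_nonnegCoeff (d : ℕ) : (1 - X ^ 7) * F d ∈ nonnegCoeff ℤ := by
  have h : (1 - X ^ 7) * F d = p 0 * p (0 + d) +
      X ^ 7 * weightSum (fun b => p (b + 1) * p (b + 1 + d) - p b * p (b + d)) := by
    rw [weightSum_sub, mul_sub, add_sub, ← weightSum_eq_zero_add fun b => p b * p (b + d), ← F]
    ring
  rw [h]
  exact add_mem (mul_mem (p_mem_nonnegCoeff _) (p_mem_nonnegCoeff _))
    (X_pow_mul_mem_nonnegCoeff _
      (weightSum_mem_nonnegCoeff fun b => p_mul_succ_sub_mem_nonnegCoeff b d))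

-- Only even exponents cancel against `p`. For odd `d` one factor `1 - q ^ 7` makes up the parity,
-- which leaves out `d = 1, 3, 5`.
lemma sub_mul_F_mem_nonnegCoeff {d : ℕ} (hd : 6 ≤ d) :
    (X ^ (3 * d) - X ^ (4 * d)) * F d ∈ nonnegCoeff ℤ := by
  obtain ⟨k, rfl | rfl⟩ : ∃ k, d = 2 * k ∨ d = 2 * k + 7 := by
    rcases d.even_or_odd' with ⟨k, rfl | rfl⟩
    exacts [⟨k, .inl rfl⟩, ⟨k - 3, .inr (by lia)⟩]
  · have h : (X ^ (3 * (2 * k)) - X ^ (4 * (2 * k))) * F (2 * k) =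
        X ^ (6 * k) * ((1 - X ^ (2 * k)) * F (2 * k)) := by ring
    rw [h]
    exact X_pow_mul_mem_nonnegCoeff _ (one_sub_mul_F_mem_nonnegCoeff (by lia))
  · have h : (X ^ (3 * (2 * k + 7)) - X ^ (4 * (2 * k + 7))) * F (2 * k + 7) =
        X ^ (6 * k + 21) * ((1 - X ^ 7) * F (2 * k + 7) +
          X ^ 7 * ((1 - X ^ (2 * k)) * F (2 * k + 7))) := by ring
    rw [h]
    exact X_pow_mul_mem_nonnegCoeff _ (add_mem (one_sub_X_pow_seven_mul_F_mem_nonnegCoeff _)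
      (X_pow_mul_mem_nonnegCoeff _ (one_sub_mul_F_mem_nonnegCoeff (by lia))))

lemma F_eq_add (d : ℕ) :
    F d = (1 - X ^ (2 * (d + 1))) * F (d + 1) + X ^ (2 * d + 9) * F (d + 2) := by
  have h : F d = weightSum fun b => (1 - X ^ (2 * (d + 1))) * (p b * p (b + (d + 1))) +
      X ^ (2 * (d + 1)) * ((1 - X ^ (2 * b)) * p b * p (b + (d + 1))) := by
    refine congrArg weightSum (funext fun b => ?_)
    rw [← one_sub_mul_p_succ (b + d)]
    ring_nf
  rw [h, weightSum_add, weightSum_const_mul, weightSum_const_mul, ← F, weightSum_eq_zero_add]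
  simp only [one_sub_mul_p_succ, F, add_right_comm _ 1, add_assoc, Nat.reduceAdd]
  ring

/-- The terms of the series `(1 - q ^ 2) * F d`. -/
noncomputable def reducedTerm (d b : ℕ) : ℤ⟦X⟧ := (1 - X ^ 2) * (p b * p (b + d))

lemma weightSum_reducedTerm (d : ℕ) : weightSum (reducedTerm d) = (1 - X ^ 2) * F d :=
  weightSum_const_mul _ _

lemma one_sub_mul_F_four_sub_mem_nonnegCoeff :
    (1 - X ^ 4) * F 4 - weightSum (reducedTerm 3) ∈ nonnegCoeff ℤ := by
  have h : (1 - X ^ 4) * F 4 - weightSum (reducedTerm 3) =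
      weightSum fun b => (X ^ 2 + X ^ (2 * (b + 4))) * (p b * ((1 - X ^ (2 * 1)) * p (b + 4))) := by
    rw [F, ← weightSum_const_mul, ← weightSum_sub]
    refine congrArg weightSum (funext fun b => ?_)
    rw [reducedTerm, ← one_sub_mul_p_succ (b + 3)]
    ring
  rw [h]
  exact weightSum_mem_nonnegCoeff fun b => mul_mem
    (add_mem (pow_mem X_mem_nonnegCoeff _) (pow_mem X_mem_nonnegCoeff _))
    (mul_mem (p_mem_nonnegCoeff _) (one_sub_mul_p_mem_nonnegCoeff (by lia)))

lemma weightSum_reducedTerm_three_sub_mem_nonnegCoeff :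
    weightSum (reducedTerm 3) - reducedTerm 3 0 - X ^ 9 * ((1 - X ^ 2) * F 5) ∈ nonnegCoeff ℤ := by
  have h : weightSum (reducedTerm 3) - reducedTerm 3 0 - X ^ 9 * ((1 - X ^ 2) * F 5) =
      X ^ 7 * weightSum fun b => reducedTerm 3 (b + 1) - X ^ 2 * reducedTerm 5 b := by
    rw [weightSum_sub, weightSum_const_mul, weightSum_reducedTerm 5,
      weightSum_eq_zero_add (reducedTerm 3)]
    ring
  rw [h]
  refine X_pow_mul_mem_nonnegCoeff _ (weightSum_mem_nonnegCoeff fun b => ?_)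
  have hb : reducedTerm 3 (b + 1) - X ^ 2 * reducedTerm 5 b =
      (1 - X ^ (2 * 1)) * p (b + 1) * ((1 - X ^ (2 * 1)) * p (b + 5)) +
      X ^ (2 * (b + 2)) * ((1 - X ^ (2 * 1)) * p (b + 1) * ((1 - X ^ (2 * 3)) * p (b + 5))) := by
    rw [reducedTerm, reducedTerm, add_assoc, ← one_sub_mul_p_succ b,
      ← one_sub_mul_p_succ (b + (1 + 3))]
    ring_nf
  rw [hb]
  exact add_mem
    (mul_mem (one_sub_mul_p_mem_nonnegCoeff (by lia)) (one_sub_mul_p_mem_nonnegCoeff (by lia)))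
    (X_pow_mul_mem_nonnegCoeff _
      (mul_mem (one_sub_mul_p_mem_nonnegCoeff (by lia)) (one_sub_mul_p_mem_nonnegCoeff (by lia))))

/-- The terms of the series left of the cases `d = 2` and `d = 3` in `weightSum_remainderTerm`.
The negative part `-q ^ 4 * reducedTerm 2` enters with its index shifted by one and the positive
part `(q ^ 3 + q ^ 5) * reducedTerm 2` with its index shifted by two, where each shift costs `q ^ 7`
and `q ^ 9` is divided out. With these shifts all terms but the first are nonnegative. -/
noncomputable def remainderTerm (b : ℕ) : ℤ⟦X⟧ :=
  (1 + X ^ 4) * reducedTerm 3 b - X ^ 2 * reducedTerm 2 (b + 1) +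
    (X ^ 8 + X ^ 10) * reducedTerm 2 (b + 2)

lemma remainderTerm_succ_mem_nonnegCoeff (b : ℕ) : remainderTerm (b + 1) ∈ nonnegCoeff ℤ := by
  have h : remainderTerm (b + 1) =
      (1 - X ^ (2 * 1)) * p (b + 2) * ((1 - X ^ (2 * 1)) * p (b + 2 + 2)) +
      (X ^ 4 + X ^ 8) * ((1 - X ^ (2 * b)) * p (b + 2) * ((1 - X ^ (2 * 1)) * p (b + 2 + 2))) +
      X ^ 10 * ((1 - X ^ (2 * 1)) * p (b + 2) * p (b + 2 + 2)) +
      (X ^ 8 + X ^ 10) *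
        ((1 - X ^ 2) * (p (b + 2 + 1) * p (b + 2 + 1 + 2) - p (b + 2) * p (b + 2 + 2))) := by
    rw [remainderTerm, reducedTerm, reducedTerm, reducedTerm, ← one_sub_mul_p_succ (b + 1)]
    ring_nf
  rw [h]
  have hX (i j : ℕ) : (X ^ i + X ^ j : ℤ⟦X⟧) ∈ nonnegCoeff ℤ :=
    add_mem (pow_mem X_mem_nonnegCoeff _) (pow_mem X_mem_nonnegCoeff _)
  refine add_mem (add_mem (add_mem ?_ (mul_mem (hX _ _) ?_)) (X_pow_mul_mem_nonnegCoeff _ ?_))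
    (mul_mem (hX _ _) (one_sub_mul_p_mul_succ_sub_mem_nonnegCoeff _ _))
  · exact mul_mem (one_sub_mul_p_mem_nonnegCoeff (by lia)) (one_sub_mul_p_mem_nonnegCoeff (by lia))
  · exact mul_mem (one_sub_mul_p_mem_nonnegCoeff (by lia)) (one_sub_mul_p_mem_nonnegCoeff (by lia))
  · exact mul_mem (one_sub_mul_p_mem_nonnegCoeff (by lia)) (p_mem_nonnegCoeff _)

lemma remainderTerm_zero_add_mem_nonnegCoeff :
    remainderTerm 0 + X ^ 2 * reducedTerm 3 0 ∈ nonnegCoeff ℤ := by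
  have h₁ : (1 - X ^ 2) * p 1 = 1 := (one_sub_mul_p_succ 0).trans p_zero
  have h₂ : (1 - X ^ 4) * p 2 = p 1 := one_sub_mul_p_succ 1
  have h₃ : (1 - X ^ 6) * p 3 = p 2 := one_sub_mul_p_succ 2
  have h : remainderTerm 0 + X ^ 2 * reducedTerm 3 0 = (1 - X ^ (2 * 1)) * p 2 +
      X ^ 8 * (p 1 * (p 4 - p 3) + (p 1 - p 0) * p 3) := by
    simp only [remainderTerm, reducedTerm, p_zero, zero_add, Nat.reduceAdd]
    linear_combination -X ^ 2 * p 3 * h₁ + X ^ 8 * p 4 * h₂ + (1 - X ^ 2) * h₃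
  rw [h]
  exact add_mem (one_sub_mul_p_mem_nonnegCoeff (by lia)) (X_pow_mul_mem_nonnegCoeff _
    (add_mem (mul_mem (p_mem_nonnegCoeff _) (p_succ_sub_mem_nonnegCoeff _))
      (mul_mem (p_succ_sub_mem_nonnegCoeff _) (p_mem_nonnegCoeff _))))

lemma weightSum_remainderTerm_add_mem_nonnegCoeff :
    weightSum remainderTerm + X ^ 2 * reducedTerm 3 0 ∈ nonnegCoeff ℤ := by
  rw [weightSum_eq_zero_add, add_right_comm]
  exact add_mem remainderTerm_zero_add_mem_nonnegCoeff
    (X_pow_mul_mem_nonnegCoeff _ (weightSum_mem_nonnegCoeff remainderTerm_succ_mem_nonnegCoeff))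

-- The coefficient of `F 1` lacks the factor `1 - q ^ 2`. The recurrence for `F 1` trades it for
-- `F 2` and `F 3`, whose coefficients then contain this factor.
lemma sum_Icc_five_sub_mul_F :
    ∑ d ∈ Icc 1 5, (X ^ (3 * d) - X ^ (4 * d)) * F d =
      (X ^ 3 - X ^ 4 + X ^ 5) * weightSum (reducedTerm 2) +
      (X ^ 9 + X ^ 11 - X ^ 12 + X ^ 13) * weightSum (reducedTerm 3) +
      X ^ 12 * ((1 - X ^ 4) * F 4) + (X ^ 15 - X ^ 20) * F 5 := by
  have hF : F 1 = (1 - X ^ 4) * F 2 + X ^ 11 * F 3 := F_eq_add 1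
  simp only [weightSum_reducedTerm, sum_Icc_succ_top, Nat.reduceLeDiff, Nat.reduceAdd, Icc_self,
    sum_singleton]
  linear_combination (X ^ 3 - X ^ 4) * hF

lemma weightSum_remainderTerm :
    X ^ 9 * weightSum remainderTerm =
      (X ^ 3 - X ^ 4 + X ^ 5) * weightSum (reducedTerm 2) +
      (X ^ 9 + X ^ 13) * weightSum (reducedTerm 3) -
      ((X ^ 3 - X ^ 4 + X ^ 5) * reducedTerm 2 0 + (X ^ 10 + X ^ 12) * reducedTerm 2 1) := by
  have hsplit : weightSum remainderTerm = (1 + X ^ 4) * weightSum (reducedTerm 3) -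
      X ^ 2 * weightSum (fun b => reducedTerm 2 (b + 1)) +
      (X ^ 8 + X ^ 10) * weightSum (fun b => reducedTerm 2 (b + 2)) := by
    simp only [← weightSum_const_mul, ← weightSum_sub, ← weightSum_add]
    rfl
  have hshift₁ : weightSum (reducedTerm 2) =
      reducedTerm 2 0 + X ^ 7 * weightSum (fun b => reducedTerm 2 (b + 1)) :=
    weightSum_eq_zero_add _
  have hshift₂ : weightSum (fun b => reducedTerm 2 (b + 1)) =
      reducedTerm 2 1 + X ^ 7 * weightSum (fun b => reducedTerm 2 (b + 2)) :=
    weightSum_eq_zero_add _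
  linear_combination X ^ 9 * hsplit - (X ^ 3 - X ^ 4 + X ^ 5) * hshift₁ -
    (X ^ 10 + X ^ 12) * hshift₂

lemma boundary_reducedTerm_two :
    (X ^ 3 - X ^ 4 + X ^ 5) * reducedTerm 2 0 + (X ^ 10 + X ^ 12) * reducedTerm 2 1 =
      (X ^ 3 + X ^ 10) * p 1 - X ^ 4 - X ^ 8 +
      X ^ 10 * (p 3 - p 2 + (p 2 - p 1)) + X ^ 12 * (p 3 - p 2 + X ^ 2 * p 2) := by
  have h₁ : (1 - X ^ 2) * p 1 = 1 := (one_sub_mul_p_succ 0).trans p_zero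
  have h₂ : (1 - X ^ 4) * p 2 = p 1 := one_sub_mul_p_succ 1
  have hzero : reducedTerm 2 0 = (1 - X ^ 2) * p 2 := by
    simp only [reducedTerm, p_zero, one_mul, zero_add]
  have hone : reducedTerm 2 1 = p 3 := by rw [reducedTerm, ← mul_assoc, h₁, one_mul]
  rw [hzero, hone]
  linear_combination (-X ^ 4 - X ^ 8) * h₁ + (X ^ 3 - (X ^ 4 + X ^ 8) * (1 - X ^ 2)) * h₂

lemma sum_Icc_five_sub_mem_nonnegCoeff :
    ∑ d ∈ Icc 1 5, (X ^ (3 * d) - X ^ (4 * d)) * F d - ((X ^ 3 + X ^ 10) * p 1 - X ^ 4 - X ^ 8) ∈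
      nonnegCoeff ℤ := by
  have h : ∑ d ∈ Icc 1 5, (X ^ (3 * d) - X ^ (4 * d)) * F d -
      ((X ^ 3 + X ^ 10) * p 1 - X ^ 4 - X ^ 8) =
      X ^ 12 * ((1 - X ^ 4) * F 4 - weightSum (reducedTerm 3)) +
      X ^ 15 * ((1 - X ^ 7) * F 5) +
      X ^ 11 * (weightSum (reducedTerm 3) - reducedTerm 3 0 - X ^ 9 * ((1 - X ^ 2) * F 5)) +
      X ^ 9 * (weightSum remainderTerm + X ^ 2 * reducedTerm 3 0) +
      X ^ 10 * (p 3 - p 2 + (p 2 - p 1)) +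
      X ^ 12 * (p 3 - p 2 + X ^ 2 * p 2) := by
    linear_combination sum_Icc_five_sub_mul_F - weightSum_remainderTerm + boundary_reducedTerm_two
  rw [h]
  refine add_mem (add_mem (add_mem (add_mem (add_mem ?_ ?_) ?_) ?_) ?_) ?_ <;>
    refine X_pow_mul_mem_nonnegCoeff _ ?_
  · exact one_sub_mul_F_four_sub_mem_nonnegCoeff
  · exact one_sub_X_pow_seven_mul_F_mem_nonnegCoeff 5
  · exact weightSum_reducedTerm_three_sub_mem_nonnegCoeff
  · exact weightSum_remainderTerm_add_mem_nonnegCoeff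
  · exact add_mem (p_succ_sub_mem_nonnegCoeff _) (p_succ_sub_mem_nonnegCoeff _)
  · exact add_mem (p_succ_sub_mem_nonnegCoeff _) (X_pow_mul_mem_nonnegCoeff _ (p_mem_nonnegCoeff _))

-- Since `p 1` is the sum of all `q ^ (2 * j)`, the series `q ^ 3 * p 1` covers the odd exponents
-- and `q ^ 10 * p 1` the even ones from `10` on.
lemma coeff_p_one_sub_pos {n : ℕ} (hn : 8 < n) :
    0 < coeff n ((X ^ 3 + X ^ 10) * p 1 - X ^ 4 - X ^ 8 : ℤ⟦X⟧) := by
  have h₄ : n ≠ 4 := by lia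
  have h₈ : n ≠ 8 := by lia
  rw [p_one, add_mul, map_sub, map_sub, map_add, coeff_X_pow_mul', coeff_X_pow_mul', coeff_X_pow,
    coeff_X_pow, if_neg h₄, if_neg h₈, geom, coeff_mk, coeff_mk]
  split_ifs <;> lia

theorem coeff_sum_sub_mul_F_pos {n N : ℕ} (hn : 8 < n) (hN : 5 ≤ N) :
    0 < coeff n (∑ d ∈ Icc 1 N, (X ^ (3 * d) - X ^ (4 * d)) * F d) := by
  rw [← sum_sdiff (Icc_subset_Icc_right hN), map_add]
  have htail : ∑ d ∈ Icc 1 N \ Icc 1 5, (X ^ (3 * d) - X ^ (4 * d)) * F d ∈ nonnegCoeff ℤ :=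
    sum_mem fun d hd => sub_mul_F_mem_nonnegCoeff (by simp only [mem_sdiff, mem_Icc] at hd; lia)
  have hsmall := sum_Icc_five_sub_mem_nonnegCoeff n
  rw [map_sub] at hsmall
  linarith [htail n, coeff_p_one_sub_pos hn]

section Counting

variable {α β : Type*}

/-- The generating function of a weight with finite fibres: its `n`-th coefficient is the number of
elements of weight `n`. -/
noncomputable def weightSeries (w : α → ℕ) : ℤ⟦X⟧ :=
  PowerSeries.mk fun n => (Nat.card {x // w x = n} : ℤ)

lemma coeff_weightSeries (w : α → ℕ) (n : ℕ) :
    coeff n (weightSeries w) = Nat.card {x // w x = n} := coeff_mk _ _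

lemma weightSeries_comp_equiv (e : α ≃ β) (w : β → ℕ) :
    weightSeries (w ∘ e) = weightSeries w := by
  ext n
  rw [coeff_weightSeries, coeff_weightSeries]
  exact congrArg _ (Nat.card_congr (e.subtypeEquiv fun _ => Iff.rfl))

lemma weightSeries_of_unique [Unique α] (w : α → ℕ) : weightSeries w = X ^ w default := by
  ext n
  rw [coeff_weightSeries, coeff_X_pow]
  split_ifs with h
  · rw [Nat.card_congr (Equiv.subtypeUnivEquiv fun x => by rw [Unique.eq_default x, h]),
      Nat.card_unique, Nat.cast_one]
  · have : IsEmpty {x // w x = n} :=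
      Subtype.isEmpty_of_false fun x hx => h (by rw [← hx, Unique.eq_default x])
    rw [Nat.card_of_isEmpty, Nat.cast_zero]

lemma finite_const_add_eq (c n : ℕ) (w : α → ℕ) [∀ n, Finite {x // w x = n}] :
    Finite {x // c + w x = n} :=
  .of_injective _ (Subtype.impEmbedding _ (w · = n - c) fun x hx => by lia).injective

lemma weightSeries_const_add (c : ℕ) (w : α → ℕ) :
    weightSeries (fun x => c + w x) = X ^ c * weightSeries w := by
  ext n
  rw [coeff_X_pow_mul', coeff_weightSeries, coeff_weightSeries]
  split_ifs with h
  · have hiff (x : α) : c + w x = n ↔ w x = n - c := by lia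
    simp only [hiff]
  · have : IsEmpty {x // c + w x = n} := Subtype.isEmpty_of_false fun x => by lia
    rw [Nat.card_of_isEmpty, Nat.cast_zero]

lemma weightSeries_sumElim (u : α → ℕ) (v : β → ℕ) [∀ n, Finite {x // u x = n}]
    [∀ n, Finite {y // v y = n}] :
    weightSeries (Sum.elim u v) = weightSeries u + weightSeries v := by
  ext n
  rw [map_add, coeff_weightSeries, coeff_weightSeries, coeff_weightSeries,
    Nat.card_congr Equiv.subtypeSum]
  simp only [Sum.elim_inl, Sum.elim_inr, Nat.card_sum, Nat.cast_add]

lemma weightSeries_prod (u : α → ℕ) (v : β → ℕ) [∀ n, Finite {x // u x = n}]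
    [∀ n, Finite {y // v y = n}] :
    weightSeries (fun z : α × β => u z.1 + v z.2) = weightSeries u * weightSeries v := by
  ext n
  let e : {z : α × β // u z.1 + v z.2 = n} ≃
      Σ k : antidiagonal n, {x // u x = k.1.1} × {y // v y = k.1.2} :=
    { toFun z := ⟨⟨(u z.1.1, v z.1.2), mem_antidiagonal.2 z.2⟩, ⟨z.1.1, rfl⟩, ⟨z.1.2, rfl⟩⟩
      invFun k := ⟨(k.2.1, k.2.2), by rw [k.2.1.2, k.2.2.2]; exact mem_antidiagonal.1 k.1.2⟩
      left_inv _ := rfl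
      right_inv := by rintro ⟨⟨⟨i, j⟩, _⟩, ⟨x, hx : u x = i⟩, ⟨y, hy : v y = j⟩⟩; subst hx hy; rfl }
  simp only [coeff_mul, coeff_weightSeries]
  rw [Nat.card_congr e, Nat.card_sigma]
  simp only [Nat.card_prod, Nat.cast_sum, Nat.cast_mul]
  exact sum_coe_sort (antidiagonal n)
    fun k => (Nat.card {x // u x = k.1} : ℤ) * Nat.card {y // v y = k.2}

end Counting

/-- Twice the sum of a multiset of `a` natural numbers. -/
def twiceSum (a : ℕ) (s : Sym ℕ a) : ℕ := 2 * (s : Multiset ℕ).sum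

instance finite_twiceSum_eq (a n : ℕ) : Finite {s // twiceSum a s = n} := by
  refine Set.Finite.subset ((range (n + 1)).sym a).finite_toSet fun s hs => ?_
  refine mem_coe.2 (mem_sym_iff.2 fun x hx => mem_range.2 ?_)
  have hsum : 2 * (s : Multiset ℕ).sum = n := hs
  have hle : x ≤ (s : Multiset ℕ).sum := Multiset.le_sum_of_mem hx
  lia

lemma bijective_cons_zero_map_succ (a : ℕ) : Function.Bijective
    (Sum.elim (fun s => 0 ::ₛ s) (Sym.map Nat.succ) : Sym ℕ a ⊕ Sym ℕ (a + 1) → Sym ℕ (a + 1)) := by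
  constructor
  · refine Function.Injective.sumElim (Sym.cons_inj_right 0 · · |>.1)
      (Sym.map_injective Nat.succ_injective _) fun s t h => ?_
    have h0 : 0 ∈ Sym.map Nat.succ t := h ▸ Sym.mem_cons_self 0 s
    simp at h0
  · intro s
    by_cases h0 : 0 ∈ s
    · exact ⟨.inl (s.erase 0 h0), Sym.cons_erase h0⟩
    · refine ⟨.inr (s.map Nat.pred), ?_⟩
      rw [Sum.elim_inr, Sym.map_map]
      refine (Sym.map_congr fun x hx => ?_).trans (Sym.map_id s)
      exact Nat.succ_pred (ne_of_mem_of_not_mem hx h0)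

lemma weightSeries_twiceSum_succ (a : ℕ) : weightSeries (twiceSum (a + 1)) =
    weightSeries (twiceSum a) + X ^ (2 * (a + 1)) * weightSeries (twiceSum (a + 1)) := by
  have h : twiceSum (a + 1) ∘ Equiv.ofBijective _ (bijective_cons_zero_map_succ a) =
      Sum.elim (twiceSum a) fun s => 2 * (a + 1) + twiceSum (a + 1) s := by
    funext s
    rcases s with s | s
    · simp [twiceSum, Sym.coe_cons]
    · simp only [Function.comp_apply, Equiv.ofBijective_apply, Sum.elim_inr, twiceSum, Sym.coe_map,
        Nat.succ_eq_add_one, Multiset.sum_map_add, Multiset.map_id', Multiset.map_const',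
        Multiset.sum_replicate, Sym.card_coe, smul_eq_mul]
      ring
  have (n : ℕ) := finite_const_add_eq (2 * (a + 1)) n (twiceSum (a + 1))
  rw [← weightSeries_const_add, ← weightSeries_sumElim, ← h, weightSeries_comp_equiv]

lemma weightSeries_twiceSum (a : ℕ) : weightSeries (twiceSum a) = p a := by
  induction a with
  | zero => exact (weightSeries_of_unique _).trans p_zero.symm
  | succ a ih =>
    have hgeom : (1 - X ^ (2 * (a + 1))) * geom (2 * (a + 1)) = 1 := one_sub_mul_geom (by lia)
    have hp : p (a + 1) = p a * geom (2 * (a + 1)) := prod_range_succ _ _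
    linear_combination geom (2 * (a + 1)) * weightSeries_twiceSum_succ a -
      weightSeries (twiceSum (a + 1)) * hgeom + geom (2 * (a + 1)) * ih - hp

/-- The multiset of the odd numbers `2 * x + 3`, `x ∈ s`, and the even numbers `2 * y + 4`,
`y ∈ t`. -/
def joinParts (s t : Multiset ℕ) : Multiset ℕ := s.map (2 * · + 3) + t.map (2 * · + 4)

lemma filter_odd_joinParts (s t : Multiset ℕ) :
    (joinParts s t).filter (· % 2 = 1) = s.map (2 * · + 3) := by
  rw [joinParts, Multiset.filter_add, Multiset.filter_eq_self.2, Multiset.filter_eq_nil.2, add_zero]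
  all_goals
    simp only [Multiset.mem_map]
    rintro _ ⟨x, -, rfl⟩
    lia

lemma filter_even_joinParts (s t : Multiset ℕ) :
    (joinParts s t).filter (· % 2 = 0) = t.map (2 * · + 4) := by
  rw [joinParts, Multiset.filter_add, Multiset.filter_eq_nil.2, Multiset.filter_eq_self.2, zero_add]
  all_goals
    simp only [Multiset.mem_map]
    rintro _ ⟨x, -, rfl⟩
    lia

lemma joinParts_inj {s t s' t' : Multiset ℕ} (h : joinParts s t = joinParts s' t') :
    s = s' ∧ t = t' := by
  constructor
  · have hinj : Function.Injective (2 * · + 3 : ℕ → ℕ) := fun x y hxy => by lia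
    refine Multiset.map_injective hinj ?_
    rw [← filter_odd_joinParts s t, h, filter_odd_joinParts]
  · have hinj : Function.Injective (2 * · + 4 : ℕ → ℕ) := fun x y hxy => by lia
    refine Multiset.map_injective hinj ?_
    rw [← filter_even_joinParts s t, h, filter_even_joinParts]

lemma sum_map_two_mul_add (s : Multiset ℕ) (c : ℕ) :
    (s.map (2 * · + c)).sum = 2 * s.sum + s.card * c := by
  rw [Multiset.sum_map_add, Multiset.sum_map_mul_left, Multiset.map_id', Multiset.map_const',
    Multiset.sum_replicate, smul_eq_mul]

lemma exists_joinParts_eq_iff {m : Multiset ℕ} :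
    (∃ s t, joinParts s t = m) ↔ ∀ x ∈ m, 3 ≤ x := by
  constructor
  · rintro ⟨s, t, rfl⟩ x hx
    simp only [joinParts, Multiset.mem_add, Multiset.mem_map] at hx
    lia
  · intro h
    induction m using Multiset.induction_on with
    | empty => exact ⟨0, 0, rfl⟩
    | cons x m ih =>
      obtain ⟨s, t, rfl⟩ := ih fun y hy => h y (Multiset.mem_cons_of_mem hy)
      have hx : 3 ≤ x := h x (Multiset.mem_cons_self _ _)
      obtain ⟨k, rfl | rfl⟩ : ∃ k, x = 2 * k + 3 ∨ x = 2 * k + 4 := ⟨(x - 3) / 2, by lia⟩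
      · exact ⟨k ::ₘ s, t, by simp [joinParts]⟩
      · exact ⟨s, k ::ₘ t, by simp [joinParts]⟩

/-- The partition of `n` with odd parts `2 * x + 3`, `x ∈ z.1`, and even parts `2 * y + 4`,
`y ∈ z.2`. -/
def partitionOfSym {n a b : ℕ} (z : {z : Sym ℕ a × Sym ℕ b //
    3 * a + 4 * b + (twiceSum a z.1 + twiceSum b z.2) = n}) : n.Partition where
  parts := joinParts z.1.1 z.1.2
  parts_pos h := three_pos.trans_le (exists_joinParts_eq_iff.1 ⟨_, _, rfl⟩ _ h)
  parts_sum := by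
    have h := z.2
    simp only [twiceSum] at h
    rw [joinParts, Multiset.sum_add, sum_map_two_mul_add, sum_map_two_mul_add, Sym.card_coe,
      Sym.card_coe]
    lia

lemma partitionOfSym_injective {n a b : ℕ} :
    Function.Injective (partitionOfSym (n := n) (a := a) (b := b)) := fun z z' h => by
  obtain ⟨h₁, h₂⟩ := joinParts_inj (congrArg Nat.Partition.parts h)
  exact Subtype.ext (Prod.ext (Sym.coe_injective h₁) (Sym.coe_injective h₂))

lemma mem_range_partitionOfSym {n a b : ℕ} {l : n.Partition} :
    l ∈ Set.range (partitionOfSym (n := n) (a := a) (b := b)) ↔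
      (1 ∉ l.parts ∧ 2 ∉ l.parts) ∧ l.oddCount = a ∧ l.evenCount = b := by
  have hparts : (1 ∉ l.parts ∧ 2 ∉ l.parts) ↔ ∃ s t, joinParts s t = l.parts := by
    rw [exists_joinParts_eq_iff]
    refine ⟨fun h x hx => ?_, fun h => ⟨fun h₁ => ?_, fun h₂ => ?_⟩⟩
    · have h₁ : x ≠ 1 := ne_of_mem_of_not_mem hx h.1
      have h₂ : x ≠ 2 := ne_of_mem_of_not_mem hx h.2
      have := l.parts_pos hx
      lia
    · exact absurd (h 1 h₁) (by lia)
    · exact absurd (h 2 h₂) (by lia)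
  rw [hparts, Nat.Partition.oddCount, Nat.Partition.evenCount]
  constructor
  · rintro ⟨⟨⟨s, t⟩, hst⟩, rfl⟩
    refine ⟨⟨s, t, rfl⟩, ?_, ?_⟩
    · rw [partitionOfSym, filter_odd_joinParts, Multiset.card_map, Sym.card_coe]
    · rw [partitionOfSym, filter_even_joinParts, Multiset.card_map, Sym.card_coe]
  · rintro ⟨⟨s, t, h⟩, ha, hb⟩
    rw [← h, filter_odd_joinParts, Multiset.card_map] at ha
    rw [← h, filter_even_joinParts, Multiset.card_map] at hb
    subst ha hb
    refine ⟨⟨(.mk s rfl, .mk t rfl), ?_⟩, Nat.Partition.ext h⟩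
    have hsum := l.parts_sum
    rw [← h, joinParts, Multiset.sum_add, sum_map_two_mul_add, sum_map_two_mul_add] at hsum
    simp only [twiceSum, Sym.coe_mk]
    lia

lemma card_oddCount_evenCount_eq (n a b : ℕ) :
    (Nat.card {l : n.Partition //
      (1 ∉ l.parts ∧ 2 ∉ l.parts) ∧ l.oddCount = a ∧ l.evenCount = b} : ℤ) =
      coeff n (X ^ (3 * a + 4 * b) * (p a * p b)) := by
  rw [← weightSeries_twiceSum a, ← weightSeries_twiceSum b, ← weightSeries_prod,
    ← weightSeries_const_add, coeff_weightSeries]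
  exact congrArg _ (Nat.card_congr ((Equiv.ofInjective _ partitionOfSym_injective).trans
    (Equiv.subtypeEquivRight fun _ => mem_range_partitionOfSym))).symm

lemma card_parts_le {n : ℕ} (l : n.Partition) : l.parts.card ≤ n := by
  have h := Multiset.card_nsmul_le_sum (s := l.parts) (a := 1) fun _ hx => l.parts_pos hx
  rwa [l.parts_sum, smul_eq_mul, mul_one] at h

lemma oddCount_le {n : ℕ} (l : n.Partition) : l.oddCount ≤ n :=
  (Multiset.card_le_card (Multiset.filter_le _ _)).trans (card_parts_le l)

lemma evenCount_le {n : ℕ} (l : n.Partition) : l.evenCount ≤ n :=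
  (Multiset.card_le_card (Multiset.filter_le _ _)).trans (card_parts_le l)

lemma card_lt_eq_sum {ι : Type*} [Finite ι] (P : ι → Prop) {u v : ι → ℕ} {N : ℕ}
    (hu : ∀ x, u x ≤ N) :
    Nat.card {x // P x ∧ v x < u x} =
      ∑ d ∈ Icc 1 N, ∑ b ∈ range (N + 1), Nat.card {x // P x ∧ u x = b + d ∧ v x = b} := by
  classical
  have := Fintype.ofFinite ι
  simp only [Nat.card_eq_fintype_card, Fintype.card_subtype]
  rw [← sum_product', card_eq_sum_card_fiberwise (t := Icc 1 N ×ˢ range (N + 1))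
    (f := fun x => (u x - v x, v x))]
  · refine sum_congr rfl fun k hk => congrArg card ?_
    ext x
    simp only [mem_filter, mem_univ, true_and, Prod.ext_iff, mem_product, mem_Icc] at hk ⊢
    lia
  · intro x hx
    have := hu x
    simp only [coe_filter, mem_univ, true_and, Set.mem_ofPred_eq, coe_product, Set.mem_prod,
      mem_coe, mem_Icc, mem_range] at hx ⊢
    lia

lemma coeff_X_pow_mul_F (n c d : ℕ) :
    coeff n (X ^ c * F d) = ∑ b ∈ range (n + 1), coeff n (X ^ (7 * b + c) * (p b * p (b + d))) := by
  simp only [F, ← weightSum_const_mul, coeff_weightSum _ n.lt_succ_self, pow_add, mul_assoc]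

lemma card_evenCount_lt_oddCount (n : ℕ) :
    (Nat.card {l : n.Partition // (1 ∉ l.parts ∧ 2 ∉ l.parts) ∧ l.evenCount < l.oddCount} : ℤ) =
      coeff n (∑ d ∈ Icc 1 n, X ^ (3 * d) * F d) := by
  rw [card_lt_eq_sum _ oddCount_le, map_sum]
  push_cast
  refine sum_congr rfl fun d _ => ?_
  rw [coeff_X_pow_mul_F]
  refine sum_congr rfl fun b _ => ?_
  rw [card_oddCount_evenCount_eq, mul_comm (p b)]
  congr 3
  ring

lemma card_oddCount_lt_evenCount (n : ℕ) :
    (Nat.card {l : n.Partition // (1 ∉ l.parts ∧ 2 ∉ l.parts) ∧ l.oddCount < l.evenCount} : ℤ) =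
      coeff n (∑ d ∈ Icc 1 n, X ^ (4 * d) * F d) := by
  rw [card_lt_eq_sum _ evenCount_le, map_sum]
  push_cast
  refine sum_congr rfl fun d _ => ?_
  rw [coeff_X_pow_mul_F]
  refine sum_congr rfl fun b _ => ?_
  simp only [and_comm (a := _ = b + d), card_oddCount_evenCount_eq]
  congr 3
  ring

end ParityBias

/-- For every integer `n > 8`, among partitions of `n` with no part equal to `1` or `2`,
those with more odd parts than even parts outnumber those with more even parts than
odd parts. -/
theorem po_gt_pe_no_one_two (n : ℕ) (hn : 8 < n) :
    Nat.card {l : n.Partition // (1 ∉ l.parts ∧ 2 ∉ l.parts) ∧ l.evenCount < l.oddCount} >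
      Nat.card {l : n.Partition // (1 ∉ l.parts ∧ 2 ∉ l.parts) ∧ l.oddCount < l.evenCount} := by
  have hpos := ParityBias.coeff_sum_sub_mul_F_pos hn (by lia : 5 ≤ n)
  simp only [sub_mul, Finset.sum_sub_distrib, map_sub] at hpos
  rw [← ParityBias.card_evenCount_lt_oddCount, ← ParityBias.card_oddCount_lt_evenCount] at hpos
  exact_mod_cast sub_pos.1 hpos
end

section
/- For every even integer n with n ≥ 14, the following inequality holds: Σ_{k=1}^{(n-6)/2} ⌊(n-2k-2)/4⌋ > 1 + Σ_{k=1}^{⌊(n-2)/6⌋} ⌊(n-6k+2)/4⌋ + Σ_{k=1}^{⌊(n-6)/6⌋} ⌊(n-6k-2)/4⌋. -/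
/-!
Raising `n` by `6` prepends three terms to the left-hand sum, `⌊(n-2)/4⌋ + ⌊n/4⌋ + ⌊(n+2)/4⌋`, and
one term to each sum on the right, `⌊(n+2)/4⌋` and `⌊(n-2)/4⌋`. The left-hand side thus gains
`⌊n/4⌋` over the right-hand side, so the inequality propagates with period `6` from the
values `14 ≤ n < 20`.
-/

/-- The sum of `f` over the terms `n - d`, `n - 2 * d`, … of the arithmetic progression descending
from `n` that are at least `a`. It is indexed by the number of steps `k`, so that each of the three
sums compared below is an instance by unfolding. -/
def descendingSum {M : Type*} [AddCommMonoid M] (f : ℕ → M) (a d n : ℕ) : M :=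
  ∑ k ∈ Finset.Icc 1 ((n - a) / d), f (n - d * k)

theorem sum_Icc_one_succ {M : Type*} [AddCommMonoid M] (f : ℕ → M) (m : ℕ) :
    ∑ k ∈ Finset.Icc 1 (m + 1), f k = f 1 + ∑ k ∈ Finset.Icc 1 m, f (k + 1) := by
  rw [← Finset.add_sum_Ioc_eq_sum_Icc (Nat.le_add_left 1 m), ← Finset.Icc_add_one_left_eq_Ioc,
    ← Finset.map_add_right_Icc, Finset.sum_map]
  simp only [addRightEmbedding_apply]

theorem descendingSum_add_step {M : Type*} [AddCommMonoid M] (f : ℕ → M) {a d n : ℕ}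
    (hd : 0 < d) (han : a ≤ n) :
    descendingSum f a d (n + d) = f n + descendingSum f a d n := by
  have term_shift (k : ℕ) : n + d - d * (k + 1) = n - d * k := by
    rw [Nat.mul_succ, Nat.add_sub_add_right]
  have count_succ : (n + d - a) / d = (n - a) / d + 1 := by
    rw [Nat.sub_add_comm han, Nat.add_div_right _ hd]
  simp only [descendingSum, count_succ, sum_Icc_one_succ, term_shift, mul_one, Nat.add_sub_cancel]

theorem descendingSum_two_add_six {M : Type*} [AddCommMonoid M] (f : ℕ → M) {a n : ℕ}
    (han : a ≤ n) :
    descendingSum f a 2 (n + 6) = f (n + 4) + (f (n + 2) + (f n + descendingSum f a 2 n)) := by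
  rw [show n + 6 = n + 2 + 2 + 2 from rfl, descendingSum_add_step f two_pos (by omega),
    descendingSum_add_step f two_pos (by omega), descendingSum_add_step f two_pos han]

theorem sum_ineq_even_general (n : ℕ) (hn : 14 ≤ n) :
    ∑ k ∈ Finset.Icc 1 ((n - 6) / 2), (n - 2 * k - 2) / 4 >
      1 + ∑ k ∈ Finset.Icc 1 ((n - 2) / 6), (n - 6 * k + 2) / 4
        + ∑ k ∈ Finset.Icc 1 ((n - 6) / 6), (n - 6 * k - 2) / 4 := by
  change descendingSum (fun x ↦ (x - 2) / 4) 6 2 n >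
    1 + descendingSum (fun x ↦ (x + 2) / 4) 2 6 n + descendingSum (fun x ↦ (x - 2) / 4) 6 6 n
  induction n using Nat.strong_induction_on with
  | h n ih =>
    obtain hlt | hge := lt_or_ge n 20
    · interval_cases n <;> decide
    · obtain ⟨m, rfl⟩ := Nat.exists_eq_add_of_le' (show 6 ≤ n by omega)
      have ineq_m := ih m (by omega) (by omega)
      have new_terms_le : (m + 2) / 4 + (m - 2) / 4 ≤
          (m + 4 - 2) / 4 + ((m + 2 - 2) / 4 + (m - 2) / 4) := by omega
      rw [descendingSum_two_add_six _ (by omega), descendingSum_add_step _ (by norm_num) (by omega),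
        descendingSum_add_step _ (by norm_num) (by omega)]
      linarith

/-- For every even integer `n ≥ 14`,
`Σ_{k=1}^{(n-6)/2} ⌊(n-2k-2)/4⌋ > 1 + Σ_{k=1}^{⌊(n-2)/6⌋} ⌊(n-6k+2)/4⌋ +
Σ_{k=1}^{⌊(n-6)/6⌋} ⌊(n-6k-2)/4⌋`.  (All quantities appearing under the floors are
nonnegative in the given ranges, so natural-number division faithfully encodes the
floors.) -/
theorem sum_ineq_even (n : ℕ) (hev : Even n) (hn : 14 ≤ n) :
    ∑ k ∈ Finset.Icc 1 ((n - 6) / 2), (n - 2 * k - 2) / 4 >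
      1 + ∑ k ∈ Finset.Icc 1 ((n - 2) / 6), (n - 6 * k + 2) / 4
        + ∑ k ∈ Finset.Icc 1 ((n - 6) / 6), (n - 6 * k - 2) / 4 :=
  sum_ineq_even_general n hn
end

section
/- For every odd integer n with n ≥ 9, the following inequality holds: Σ_{k=1}^{(n-5)/2} ⌊(n-2k-1)/4⌋ > 1 + Σ_{k=1}^{⌊(n-5)/6⌋} ⌊(n-6k-1)/4⌋ + Σ_{k=1}^{⌊(n-9)/6⌋} ⌊(n-6k-5)/4⌋. -/
/-!
Write `f k = ⌊(n - 2k - 1) / 4⌋`. The terms of the two sums on the right are `f (3k)` and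
`f (3k + 2)` with `k ≥ 1`, so together these sums are the part of the left-hand sum carried by
the indices `k ≥ 3` with `k ≢ 1 (mod 3)`. The left-hand sum also contains `f 1` and `f 2`, each
of which is at least `1` as soon as `n ≥ 9`.
-/

theorem sum_Icc_eq_sum_residue_sum_quotient {M : Type*} [AddCommMonoid M] (f : ℕ → M)
    {d : ℕ} (hd : 0 < d) (N : ℕ) :
    ∑ k ∈ Finset.Icc d N, f k =
      ∑ r ∈ Finset.range d, ∑ q ∈ Finset.Icc 1 ((N - r) / d), f (d * q + r) := by
  rw [Finset.sum_sigma']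
  refine Finset.sum_nbij' (fun k ↦ ⟨k % d, k / d⟩) (fun p ↦ d * p.2 + p.1) ?_ ?_ ?_ ?_ ?_
  · intro k hk
    obtain ⟨hdk, hkN⟩ := Finset.mem_Icc.mp hk
    have hquot : k / d ≤ (N - k % d) / d := by
      rw [Nat.le_div_iff_mul_le hd, mul_comm]
      have hdiv_mod := Nat.div_add_mod k d
      omega
    exact Finset.mem_sigma.mpr ⟨Finset.mem_range.mpr (Nat.mod_lt k hd),
      Finset.mem_Icc.mpr ⟨Nat.div_pos hdk hd, hquot⟩⟩
  · rintro ⟨r, q⟩ hrq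
    simp only [Finset.mem_sigma, Finset.mem_range, Finset.mem_Icc] at hrq ⊢
    obtain ⟨-, hq, hqN⟩ := hrq
    have hle : d ≤ d * q := Nat.le_mul_of_pos_right d hq
    have hupper : d * q ≤ N - r := by rwa [Nat.le_div_iff_mul_le hd, mul_comm] at hqN
    omega
  · intro k _
    exact Nat.div_add_mod k d
  · rintro ⟨r, q⟩ hrq
    have hr : r < d := Finset.mem_range.mp (Finset.mem_sigma.mp hrq).1
    simp [Nat.mul_add_div hd, Nat.mod_eq_of_lt hr, Nat.div_eq_of_lt hr]
  · intro k _
    rw [Nat.div_add_mod]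

theorem sum_Ico_add_sum_Icc {M : Type*} [AddCommMonoid M] (f : ℕ → M) {a b c : ℕ}
    (hab : a ≤ b) (hbc : b ≤ c + 1) :
    ∑ k ∈ Finset.Ico a b, f k + ∑ k ∈ Finset.Icc b c, f k = ∑ k ∈ Finset.Icc a c, f k := by
  simpa only [Finset.Ico_add_one_right_eq_Icc] using Finset.sum_Ico_consecutive f hab hbc

theorem sum_ineq_odd_general (n : ℕ) (hn : 9 ≤ n) :
    ∑ k ∈ Finset.Icc 1 ((n - 5) / 2), (n - 2 * k - 1) / 4 >
      1 + ∑ k ∈ Finset.Icc 1 ((n - 5) / 6), (n - 6 * k - 1) / 4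
        + ∑ k ∈ Finset.Icc 1 ((n - 9) / 6), (n - 6 * k - 5) / 4 := by
  have hresidue_zero : ∑ k ∈ Finset.Icc 1 ((n - 5) / 2 / 3), (n - 2 * (3 * k) - 1) / 4 =
      ∑ k ∈ Finset.Icc 1 ((n - 5) / 6), (n - 6 * k - 1) / 4 :=
    Finset.sum_congr (by congr 1; omega) fun k _ ↦ by omega
  have hresidue_two :
      ∑ k ∈ Finset.Icc 1 (((n - 5) / 2 - 2) / 3), (n - 2 * (3 * k + 2) - 1) / 4 =
        ∑ k ∈ Finset.Icc 1 ((n - 9) / 6), (n - 6 * k - 5) / 4 :=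
    Finset.sum_congr (by congr 1; omega) fun k _ ↦ by omega
  have hfirst_two : 2 ≤ ∑ k ∈ Finset.Ico 1 3, (n - 2 * k - 1) / 4 := by
    rw [Finset.sum_Ico_succ_top (by decide), Nat.Ico_succ_singleton, Finset.sum_singleton]
    omega
  rw [← sum_Ico_add_sum_Icc _ (by decide : 1 ≤ 3) (by omega),
    sum_Icc_eq_sum_residue_sum_quotient _ (by decide : 0 < 3)]
  simp only [Finset.sum_range_succ, Finset.sum_range_zero, zero_add, add_zero, Nat.sub_zero]
  rw [hresidue_zero, hresidue_two]
  omega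

/-- For every odd integer `n ≥ 9`,
`Σ_{k=1}^{(n-5)/2} ⌊(n-2k-1)/4⌋ > 1 + Σ_{k=1}^{⌊(n-5)/6⌋} ⌊(n-6k-1)/4⌋ +
Σ_{k=1}^{⌊(n-9)/6⌋} ⌊(n-6k-5)/4⌋`.  (All quantities appearing under the floors are
nonnegative in the given ranges, so natural-number division faithfully encodes the
floors.) -/
theorem sum_ineq_odd (n : ℕ) (hodd : Odd n) (hn : 9 ≤ n) :
    ∑ k ∈ Finset.Icc 1 ((n - 5) / 2), (n - 2 * k - 1) / 4 >
      1 + ∑ k ∈ Finset.Icc 1 ((n - 5) / 6), (n - 6 * k - 1) / 4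
        + ∑ k ∈ Finset.Icc 1 ((n - 9) / 6), (n - 6 * k - 5) / 4 :=
  sum_ineq_odd_general n hn
end

section
/- For every odd positive integer n, the number of partitions λ of n having exactly two even parts, all odd parts equal to 1, and more odd parts than even parts equals Σ_{k=1}^{(n-5)/2} ⌊(n-2k-1)/4⌋ (an empty sum being 0). -/
/-!
Halving the even parts of a partition of `n` whose odd parts all equal `1` gives a partition of
some `s` with `2 * s ≤ n`, which determines the original: it has `n - 2 * s` ones. There are
`⌊s / 2⌋` partitions of `s` into two parts, and having more than two ones means `2 * s + 2 < n`.
The values `s = 0, 1` contribute nothing, and the remaining ones are `s = ⌊(n - 2 * k - 1) / 2⌋`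
for `1 ≤ k ≤ ⌊(n - 5) / 2⌋`.
-/

open Finset

section DoubleAddOnes

variable {n s : ℕ}

/-- The partition of `n` obtained from a partition of `s`, where `2 * s ≤ n`, by doubling every
part and adding `n - 2 * s` ones. These are the partitions of `n` whose odd parts all equal `1`. -/
def doubleAddOnes (h : 2 * s ≤ n) (p : s.Partition) : n.Partition where
  parts := p.parts.map (2 * ·) + Multiset.replicate (n - 2 * s) 1
  parts_pos {i} hi := by
    rcases Multiset.mem_add.mp hi with hi | hi
    · obtain ⟨a, ha, rfl⟩ := Multiset.mem_map.mp hi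
      exact Nat.mul_pos two_pos (p.parts_pos ha)
    · exact Multiset.eq_of_mem_replicate hi ▸ one_pos
  parts_sum := by
    rw [Multiset.sum_add, Multiset.sum_map_mul_left, Multiset.map_id', p.parts_sum,
      Multiset.sum_replicate, smul_eq_mul, mul_one, Nat.add_sub_of_le h]

namespace doubleAddOnes

theorem filter_even_parts (h : 2 * s ≤ n) (p : s.Partition) :
    (doubleAddOnes h p).parts.filter (fun i => i % 2 = 0) = p.parts.map (2 * ·) := by
  have evens : (p.parts.map (2 * ·)).filter (fun i => i % 2 = 0) = p.parts.map (2 * ·) := by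
    simp [Multiset.filter_eq_self]
  have ones : (Multiset.replicate (n - 2 * s) 1).filter (fun i => i % 2 = 0) = 0 := by
    simp +contextual [Multiset.filter_eq_nil, Multiset.mem_replicate]
  rw [doubleAddOnes, Multiset.filter_add, evens, ones, add_zero]

theorem filter_odd_parts (h : 2 * s ≤ n) (p : s.Partition) :
    (doubleAddOnes h p).parts.filter (fun i => i % 2 = 1) =
      Multiset.replicate (n - 2 * s) 1 := by
  have evens : (p.parts.map (2 * ·)).filter (fun i => i % 2 = 1) = 0 := by
    simp [Multiset.filter_eq_nil]
  have ones : (Multiset.replicate (n - 2 * s) 1).filter (fun i => i % 2 = 1) =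
      Multiset.replicate (n - 2 * s) 1 := by
    simp +contextual [Multiset.filter_eq_self, Multiset.mem_replicate]
  rw [doubleAddOnes, Multiset.filter_add, evens, ones, zero_add]

theorem evenCount_eq (h : 2 * s ≤ n) (p : s.Partition) :
    (doubleAddOnes h p).evenCount = p.parts.card := by
  rw [Nat.Partition.evenCount, filter_even_parts, Multiset.card_map]

theorem oddCount_eq (h : 2 * s ≤ n) (p : s.Partition) :
    (doubleAddOnes h p).oddCount = n - 2 * s := by
  rw [Nat.Partition.oddCount, filter_odd_parts, Multiset.card_replicate]

theorem eq_one_of_mem_parts (h : 2 * s ≤ n) (p : s.Partition) {i : ℕ}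
    (hi : i ∈ (doubleAddOnes h p).parts) (hodd : i % 2 = 1) : i = 1 := by
  have hmem := Multiset.mem_filter_of_mem (p := (· % 2 = 1)) hi hodd
  rw [filter_odd_parts] at hmem
  exact Multiset.eq_of_mem_replicate hmem

theorem injective (h : 2 * s ≤ n) : Function.Injective (doubleAddOnes h) := by
  intro p q hpq
  have hmap : p.parts.map (2 * ·) = q.parts.map (2 * ·) := by
    rw [← filter_even_parts h p, hpq, filter_even_parts]
  exact Nat.Partition.ext (Multiset.map_injective (mul_right_injective₀ two_ne_zero) hmap)

theorem exists_eq (l : n.Partition) (hl : ∀ i ∈ l.parts, i % 2 = 1 → i = 1) :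
    ∃ (s : ℕ) (h : 2 * s ≤ n) (p : s.Partition), doubleAddOnes h p = l := by
  set evens := l.parts.filter (fun i => i % 2 = 0)
  set halves := evens.map (· / 2) with halves_def
  have double_halves : halves.map (2 * ·) = evens := by
    rw [halves_def, Multiset.map_map]
    refine (Multiset.map_congr rfl fun i hi => ?_).trans (Multiset.map_id _)
    exact Nat.mul_div_cancel' (Nat.dvd_of_mod_eq_zero (Multiset.mem_filter.mp hi).2)
  have odds_eq : l.parts.filter (fun i => ¬ i % 2 = 0) = Multiset.replicate l.oddCount 1 := by
    simp only [Nat.mod_two_ne_zero]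
    refine Multiset.eq_replicate.mpr ⟨rfl, fun i hi => ?_⟩
    exact hl i (Multiset.mem_filter.mp hi).1 (Multiset.mem_filter.mp hi).2
  have parts_eq : halves.map (2 * ·) + Multiset.replicate l.oddCount 1 = l.parts := by
    rw [double_halves, ← odds_eq, Multiset.filter_add_not]
  have sum_eq : 2 * halves.sum + l.oddCount = n := by
    refine Eq.trans ?_ (parts_eq ▸ l.parts_sum)
    rw [Multiset.sum_add, Multiset.sum_map_mul_left, Multiset.map_id', Multiset.sum_replicate,
      smul_eq_mul, mul_one]
  have halves_pos {i : ℕ} (hi : i ∈ halves) : 0 < i := by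
    have mem_parts : 2 * i ∈ l.parts := by
      rw [← parts_eq]
      exact Multiset.mem_add.mpr (Or.inl (Multiset.mem_map_of_mem _ hi))
    exact Nat.pos_of_mul_pos_left (l.parts_pos mem_parts)
  refine ⟨halves.sum, by omega, ⟨halves, halves_pos, rfl⟩, Nat.Partition.ext ?_⟩
  have ones_eq : n - 2 * halves.sum = l.oddCount := by omega
  rw [← parts_eq, ← ones_eq]
  rfl

end doubleAddOnes

end DoubleAddOnes

theorem card_filter_partition_odd_parts_eq_one (n c t : ℕ) :
    #{l : n.Partition |
        l.evenCount = c ∧ (∀ i ∈ l.parts, i % 2 = 1 → i = 1) ∧ t < l.oddCount} =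
      ∑ s ∈ range ((n + 1 - t) / 2), #{p : s.Partition | p.parts.card = c} := by
  have two_mul_le {s : ℕ} (hs : s ∈ range ((n + 1 - t) / 2)) : 2 * s ≤ n := by
    have := mem_range.mp hs
    omega
  rw [← card_sigma]
  symm
  refine card_bij (fun x hx => doubleAddOnes (two_mul_le (mem_sigma.mp hx).1) x.2) ?_ ?_ ?_
  · rintro ⟨s, p⟩ hx
    simp only [mem_sigma, mem_range, mem_filter_univ] at hx
    simp only [mem_filter_univ, doubleAddOnes.evenCount_eq, doubleAddOnes.oddCount_eq]
    exact ⟨hx.2, fun i => doubleAddOnes.eq_one_of_mem_parts _ p, by omega⟩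
  · rintro ⟨s, p⟩ hx ⟨r, q⟩ hy heq
    have hs : 2 * s ≤ n := two_mul_le (mem_sigma.mp hx).1
    have hr : 2 * r ≤ n := two_mul_le (mem_sigma.mp hy).1
    have oddCount_eq := congrArg Nat.Partition.oddCount heq
    simp only [doubleAddOnes.oddCount_eq] at oddCount_eq
    obtain rfl : s = r := by omega
    exact congrArg (Sigma.mk s) (doubleAddOnes.injective hs heq)
  · intro l hl
    obtain ⟨even_eq, odd_one, lt_odd⟩ := (mem_filter_univ l).mp hl
    obtain ⟨s, h, p, rfl⟩ := doubleAddOnes.exists_eq l odd_one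
    rw [doubleAddOnes.evenCount_eq] at even_eq
    rw [doubleAddOnes.oddCount_eq] at lt_odd
    have hs : s < (n + 1 - t) / 2 := by omega
    exact ⟨⟨s, p⟩, mem_sigma.mpr ⟨mem_range.mpr hs, (mem_filter_univ p).mpr even_eq⟩, rfl⟩

theorem card_filter_partition_card_parts_eq_two (s : ℕ) :
    #{p : s.Partition | p.parts.card = 2} = s / 2 := by
  have le_half {a : ℕ} (ha : a ∈ Icc 1 (s / 2)) : 0 < a ∧ 2 * a ≤ s := by
    have := mem_Icc.mp ha
    omega
  rw [← Nat.add_sub_cancel (s / 2) 1, ← Nat.card_Icc]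
  symm
  refine card_bij (fun a ha => ⟨{a, s - a}, ?_, ?_⟩) ?_ ?_ ?_
  · have := le_half ha
    intro i hi
    rcases Multiset.mem_cons.mp hi with rfl | hi
    · omega
    · rw [Multiset.mem_singleton.mp hi]
      omega
  · rw [Multiset.sum_pair]
    have := le_half ha
    omega
  · simp
  · intro a ha b hb heq
    have pair_eq : ({a, s - a} : Multiset ℕ) = {b, s - b} := congrArg Nat.Partition.parts heq
    have mem_pair : a ∈ ({b, s - b} : Multiset ℕ) := pair_eq ▸ Multiset.mem_cons_self a _
    have := le_half ha
    have := le_half hb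
    rcases Multiset.mem_cons.mp mem_pair with rfl | h
    · rfl
    · have := Multiset.mem_singleton.mp h
      omega
  · intro p hp
    obtain ⟨a, b, hab⟩ := Multiset.card_eq_two.mp ((mem_filter_univ p).mp hp)
    wlog hle : a ≤ b generalizing a b
    · exact this b a (hab.trans (Multiset.pair_comm a b)) (le_of_not_ge hle)
    have sum_eq : a + b = s := by rw [← p.parts_sum, hab, Multiset.sum_pair]
    have a_pos : 0 < a := p.parts_pos (hab ▸ Multiset.mem_cons_self a _)
    have pair_eq : {a, s - a} = p.parts := by rw [hab, ← sum_eq, Nat.add_sub_cancel_left]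
    exact ⟨a, mem_Icc.mpr ⟨a_pos, by omega⟩, Nat.Partition.ext pair_eq⟩

theorem sum_range_half_eq_sum_Icc (n : ℕ) :
    ∑ s ∈ range ((n - 1) / 2), s / 2 =
      ∑ k ∈ Icc 1 ((n - 5) / 2), (n - 2 * k - 1) / 4 := by
  symm
  refine sum_of_injOn (fun k => (n - 2 * k - 1) / 2) ?_ ?_ ?_ ?_
  · intro k hk j hj heq
    simp only [coe_Icc, Set.mem_Icc] at hk hj heq
    omega
  · intro k hk
    simp only [coe_Icc, Set.mem_Icc, coe_range, Set.mem_Iio] at hk ⊢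
    omega
  · intro s hs hnot
    simp only [mem_range] at hs
    by_contra half_ne_zero
    refine hnot ⟨(n - 1) / 2 - s, ?_, ?_⟩
    · simp only [coe_Icc, Set.mem_Icc]
      omega
    · dsimp only
      omega
  · intro k _
    rw [Nat.div_div_eq_div_mul]

theorem card_Po_bar_odd_general (n : ℕ) :
    Nat.card {l : n.Partition //
        l.evenCount = 2 ∧ (∀ p ∈ l.parts, p % 2 = 1 → p = 1) ∧ l.evenCount < l.oddCount} =
      ∑ k ∈ Finset.Icc 1 ((n - 5) / 2), (n - 2 * k - 1) / 4 := by
  calc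
    _ = #{l : n.Partition |
          l.evenCount = 2 ∧ (∀ p ∈ l.parts, p % 2 = 1 → p = 1) ∧ 2 < l.oddCount} := by
      rw [Nat.card_eq_fintype_card, Fintype.card_subtype]
      exact congrArg card (filter_congr fun l _ => and_congr_right fun h => by rw [h])
    _ = ∑ s ∈ range ((n - 1) / 2), #{p : s.Partition | p.parts.card = 2} :=
      card_filter_partition_odd_parts_eq_one n 2 2
    _ = ∑ s ∈ range ((n - 1) / 2), s / 2 :=
      sum_congr rfl fun s _ => card_filter_partition_card_parts_eq_two s
    _ = _ := sum_range_half_eq_sum_Icc n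

/-- For every odd positive integer `n`, the number of partitions of `n` having exactly two
even parts, all odd parts equal to `1`, and more odd parts than even parts equals
`Σ_{k=1}^{(n-5)/2} ⌊(n-2k-1)/4⌋`. -/
theorem card_Po_bar_odd (n : ℕ) (hn : 0 < n) (hodd : Odd n) :
    Nat.card {l : n.Partition //
        l.evenCount = 2 ∧ (∀ p ∈ l.parts, p % 2 = 1 → p = 1) ∧ l.evenCount < l.oddCount} =
      ∑ k ∈ Finset.Icc 1 ((n - 5) / 2), (n - 2 * k - 1) / 4 :=
  card_Po_bar_odd_general n
end

section
/- For every even positive integer n, the number of partitions λ of n such that the number of even parts exceeds the number of odd parts by exactly 1, the largest part is even, and at most two parts of λ are greater than 2, equals 1 + Σ_{k=1}^{⌊(n-2)/6⌋} ⌊(n-6k+2)/4⌋ + Σ_{k=1}^{⌊(n-6)/6⌋} ⌊(n-6k-2)/4⌋ (empty sums being 0). -/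
/-!
Splitting off the ones and twos, a partition with at least two parts exceeding `1` and at most two
exceeding `2` has the shape `1^i 2^j b a` with `2 ≤ b ≤ a`, and the quadruple `(i, j, b, a)` is
unique. For even `a` the excess condition forces `i = j + 1` when `b` is even and `j = i + 1` when
`b` is odd. If the total `n` is even, so is the number `2k` of odd parts, and `(k, b)` determines
the partition. Counting the `b` with `b ≤ a` gives one sum for even `b` and the other for odd `b`;
the extra `1` is the partition `{n}`, the only one without odd parts.
-/

theorem card_subtype_partition_eq_card {n : ℕ} {P : Multiset ℕ → Prop} {s : Finset (Multiset ℕ)}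
    (h : ∀ m, m ∈ s ↔ (∀ p ∈ m, 0 < p) ∧ m.sum = n ∧ P m) :
    Nat.card {l : n.Partition // P l.parts} = s.card := by
  rw [← Nat.card_eq_finsetCard]
  exact Nat.card_congr
    { toFun l := ⟨l.1.parts, (h _).2 ⟨fun _ => l.1.parts_pos, l.1.parts_sum, l.2⟩⟩
      invFun m := ⟨⟨m.1, ((h _).1 m.2).1 _, ((h _).1 m.2).2.1⟩, ((h _).1 m.2).2.2⟩
      left_inv _ := rfl
      right_inv _ := rfl }

theorem countP_replicate {α : Type*} (p : α → Prop) [DecidablePred p] (n : ℕ) (a : α) :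
    (Multiset.replicate n a).countP p = if p a then n else 0 := by
  rw [← Multiset.coe_replicate, Multiset.coe_countP, List.countP_replicate]
  simp only [decide_eq_true_eq]

theorem countP_le_countP {α : Type*} {p q : α → Prop} [DecidablePred p] [DecidablePred q]
    {m : Multiset α} (h : ∀ x ∈ m, p x → q x) : m.countP p ≤ m.countP q := by
  rw [Multiset.countP_eq_card_filter, Multiset.countP_eq_card_filter]
  refine Multiset.card_le_card (Multiset.le_filter.2 ⟨Multiset.filter_le p m, fun x hx => ?_⟩)
  exact h x (Multiset.mem_of_mem_filter hx) (Multiset.of_mem_filter hx)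

theorem exists_le_and_eq_pair_of_card_eq_two {α : Type*} [LinearOrder α] {s : Multiset α}
    (hs : s.card = 2) : ∃ b a, b ≤ a ∧ s = {b, a} := by
  obtain ⟨x, y, hxy⟩ := Multiset.card_eq_two.1 hs
  obtain h | h := le_total x y
  · exact ⟨x, y, h, hxy⟩
  · exact ⟨y, x, h, hxy.trans (Multiset.pair_comm x y)⟩

theorem eq_replicate_add_replicate_add_filter {m : Multiset ℕ} (hpos : ∀ p ∈ m, 0 < p) :
    m = Multiset.replicate (m.count 1) 1 + Multiset.replicate (m.count 2) 2
      + m.filter (2 < ·) := by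
  ext x
  simp only [Multiset.count_add, Multiset.count_replicate, Multiset.count_filter]
  have hzero : m.count 0 = 0 := Multiset.count_eq_zero.2 fun h => (hpos 0 h).false
  obtain rfl | rfl | rfl | hx : x = 0 ∨ x = 1 ∨ x = 2 ∨ 2 < x := by omega
  · simp [hzero]
  · simp
  · simp
  · simp [hx, hx.ne, (show 1 < x by omega).ne]

/-- The multiset `1^i 2^j b a`. It is used with `2 ≤ b ≤ a`, so that `b` and `a` are the two
largest parts; they may themselves be equal to `2`. -/
def onesTwosPair (i j b a : ℕ) : Multiset ℕ :=
  Multiset.replicate i 1 + Multiset.replicate j 2 + {b, a}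

section onesTwosPair

variable {i j b a : ℕ}

theorem sum_onesTwosPair : (onesTwosPair i j b a).sum = i + 2 * j + b + a := by
  simp only [onesTwosPair, Multiset.insert_eq_cons, Multiset.sum_add, Multiset.sum_replicate,
    Multiset.sum_cons, Multiset.sum_singleton, smul_eq_mul]
  ring

theorem card_onesTwosPair : (onesTwosPair i j b a).card = i + j + 2 := by
  simp [onesTwosPair]

theorem mem_onesTwosPair {p : ℕ} :
    p ∈ onesTwosPair i j b a ↔ i ≠ 0 ∧ p = 1 ∨ j ≠ 0 ∧ p = 2 ∨ p = b ∨ p = a := by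
  simp only [onesTwosPair, Multiset.mem_add, Multiset.mem_replicate, Multiset.insert_eq_cons,
    Multiset.mem_cons, Multiset.mem_singleton, or_assoc]

theorem countP_onesTwosPair (p : ℕ → Prop) [DecidablePred p] :
    (onesTwosPair i j b a).countP p =
      (if p 1 then i else 0) + (if p 2 then j else 0) + (if p b then 1 else 0) +
        (if p a then 1 else 0) := by
  simp only [onesTwosPair, Multiset.insert_eq_cons, ← Multiset.cons_zero, Multiset.countP_add,
    countP_replicate, Multiset.countP_cons, Multiset.countP_zero]
  ring

theorem sup_onesTwosPair (hb : 2 ≤ b) (hba : b ≤ a) : (onesTwosPair i j b a).sup = a := by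
  refine le_antisymm (Multiset.sup_le.2 fun p hp => ?_) (Multiset.le_sup ?_)
  · rw [mem_onesTwosPair] at hp
    omega
  · simp [mem_onesTwosPair]

theorem onesTwosPair_inj {i' j' b' a' : ℕ} (hb : 2 ≤ b) (hba : b ≤ a) (hb' : 2 ≤ b')
    (hba' : b' ≤ a') :
    onesTwosPair i j b a = onesTwosPair i' j' b' a' ↔ i = i' ∧ j = j' ∧ b = b' ∧ a = a' := by
  refine ⟨fun h => ?_, by rintro ⟨rfl, rfl, rfl, rfl⟩; rfl⟩
  have hones := congrArg (Multiset.countP (· < 2)) h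
  have hcard := congrArg Multiset.card h
  have hsum := congrArg Multiset.sum h
  have hsup := congrArg Multiset.sup h
  rw [card_onesTwosPair, card_onesTwosPair] at hcard
  rw [sum_onesTwosPair, sum_onesTwosPair] at hsum
  rw [sup_onesTwosPair hb hba, sup_onesTwosPair hb' hba'] at hsup
  have hi : i = i' := by
    rw [countP_onesTwosPair, countP_onesTwosPair] at hones
    grind
  omega

theorem exists_eq_onesTwosPair {m : Multiset ℕ} (hpos : ∀ p ∈ m, 0 < p)
    (hbig : m.countP (2 < ·) ≤ 2) (htwo : 2 ≤ m.countP (2 ≤ ·)) :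
    ∃ i j b a, 2 ≤ b ∧ b ≤ a ∧ m = onesTwosPair i j b a := by
  have hm := eq_replicate_add_replicate_add_filter hpos
  have hcount : m.countP (2 ≤ ·) = m.count 2 + m.countP (2 < ·) := by
    conv_lhs => rw [hm]
    simp only [Multiset.countP_add, countP_replicate, Multiset.countP_filter]
    simp [and_iff_right_of_imp (le_of_lt (α := ℕ))]
  rw [Multiset.countP_eq_card_filter (2 < ·)] at hbig hcount
  set big := m.filter (2 < ·) with hbig_def
  -- The top two parts are the parts exceeding `2`, padded with twos if there are fewer than two.
  set top := Multiset.replicate (2 - big.card) 2 + big with htop_def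
  have htop_card : top.card = 2 := by
    simp only [htop_def, Multiset.card_add, Multiset.card_replicate]
    omega
  have htop_ge : ∀ p ∈ top, 2 ≤ p := by
    simp only [htop_def, hbig_def, Multiset.mem_add, Multiset.mem_replicate, Multiset.mem_filter]
    omega
  have hm_top : m = Multiset.replicate (m.count 1) 1 +
      Multiset.replicate (m.count 2 - (2 - big.card)) 2 + top := by
    rw [htop_def, ← add_assoc, add_assoc (Multiset.replicate _ 1), ← Multiset.replicate_add,
      Nat.sub_add_cancel (by omega), ← hm]
  obtain ⟨b, a, hba, htop⟩ := exists_le_and_eq_pair_of_card_eq_two htop_card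
  exact ⟨_, _, b, a, htop_ge b (by simp [htop]), hba, htop ▸ hm_top⟩

end onesTwosPair

/-- The condition of the theorem on the multiset of parts of a partition: one more even part than
odd parts, even largest part, at most two parts greater than `2`. -/
def IsLeftover (m : Multiset ℕ) : Prop :=
  (m.filter (fun p => p % 2 = 0)).card = (m.filter (fun p => p % 2 = 1)).card + 1 ∧
    m.sup % 2 = 0 ∧ (m.filter (fun p => 2 < p)).card ≤ 2

theorem isLeftover_iff_countP {m : Multiset ℕ} :
    IsLeftover m ↔ m.countP (· % 2 = 0) = m.countP (· % 2 = 1) + 1 ∧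
      m.sup % 2 = 0 ∧ m.countP (2 < ·) ≤ 2 := by
  simp only [IsLeftover, Multiset.countP_eq_card_filter]

theorem isLeftover_singleton {a : ℕ} : IsLeftover {a} ↔ a % 2 = 0 := by
  simp only [isLeftover_iff_countP, ← Multiset.cons_zero, Multiset.countP_cons,
    Multiset.countP_zero, Multiset.sup_cons, Multiset.sup_zero]
  grind

theorem isLeftover_onesTwosPair {i j b a : ℕ} (hb : 2 ≤ b) (hba : b ≤ a) :
    IsLeftover (onesTwosPair i j b a) ↔ a % 2 = 0 ∧ j + 1 = i + 2 * (b % 2) := by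
  have heven : (onesTwosPair i j b a).countP (· % 2 = 0) = j + (1 - b % 2) + (1 - a % 2) := by
    rw [countP_onesTwosPair]
    grind
  have hodd : (onesTwosPair i j b a).countP (· % 2 = 1) = i + b % 2 + a % 2 := by
    rw [countP_onesTwosPair]
    grind
  have hbig : (onesTwosPair i j b a).countP (2 < ·) ≤ 2 := by
    rw [countP_onesTwosPair]
    grind
  rw [isLeftover_iff_countP, sup_onesTwosPair hb hba, heven, hodd]
  omega

theorem IsLeftover.eq_singleton_or_eq_onesTwosPair {m : Multiset ℕ} (hpos : ∀ p ∈ m, 0 < p)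
    (hm : IsLeftover m) :
    (∃ a, m = {a}) ∨ ∃ i j b a, 2 ≤ b ∧ b ≤ a ∧ m = onesTwosPair i j b a := by
  obtain ⟨hexcess, -, hbig⟩ := isLeftover_iff_countP.1 hm
  have hparity : m.card = m.countP (· % 2 = 0) + m.countP (· % 2 = 1) := by
    rw [m.card_eq_countP_add_countP (· % 2 = 0)]
    exact congrArg _ (Multiset.countP_congr rfl fun p _ => propext Nat.mod_two_ne_zero)
  obtain hodd | hodd := Nat.eq_zero_or_pos (m.countP (· % 2 = 1))
  · exact .inl (Multiset.card_eq_one.1 (by omega))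
  · have heven_le : m.countP (· % 2 = 0) ≤ m.countP (2 ≤ ·) :=
      countP_le_countP fun p hp _ => by
        have hp_pos := hpos p hp
        omega
    exact .inr (exists_eq_onesTwosPair hpos hbig (by omega))

/-- For even `n`, the leftover partitions `1^(2k) 2^(2k-1) (2t) a` of `n`, whose second largest part
is even. The sum leaves `a = n - 6k + 2 - 2t`, so `2t ≤ a` amounts to `4t ≤ n - 6k + 2`. -/
def evenFamily (n : ℕ) : Finset (Multiset ℕ) :=
  ((Finset.Icc 1 ((n - 2) / 6)).sigma fun k => Finset.Icc 1 ((n - 6 * k + 2) / 4)).image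
    fun x => onesTwosPair (2 * x.1) (2 * x.1 - 1) (2 * x.2) (n - 6 * x.1 + 2 - 2 * x.2)

/-- For even `n`, the leftover partitions `1^(2k-1) 2^(2k) (2t+1) a` of `n`, whose second largest
part is odd. The sum leaves `a = n - 6k - 2t`, which is even, so `2t + 1 ≤ a` amounts to
`4t ≤ n - 6k - 2`. -/
def oddFamily (n : ℕ) : Finset (Multiset ℕ) :=
  ((Finset.Icc 1 ((n - 6) / 6)).sigma fun k => Finset.Icc 1 ((n - 6 * k - 2) / 4)).image
    fun x => onesTwosPair (2 * x.1 - 1) (2 * x.1) (2 * x.2 + 1) (n - 6 * x.1 - 2 * x.2)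

section families

variable {n : ℕ} {m : Multiset ℕ}

theorem card_evenFamily :
    (evenFamily n).card = ∑ k ∈ Finset.Icc 1 ((n - 2) / 6), (n - 6 * k + 2) / 4 := by
  rw [evenFamily, Finset.card_image_of_injOn, Finset.card_sigma]
  · simp only [Nat.card_Icc, Nat.add_sub_cancel]
  · rintro ⟨k, t⟩ hx ⟨k', t'⟩ hx' h
    simp only [Finset.coe_sigma, Set.mem_sigma_iff, Finset.mem_coe, Finset.mem_Icc] at hx hx'
    have hparts := (onesTwosPair_inj (by grind) (by grind) (by grind) (by grind)).1 h
    grind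

theorem card_oddFamily :
    (oddFamily n).card = ∑ k ∈ Finset.Icc 1 ((n - 6) / 6), (n - 6 * k - 2) / 4 := by
  rw [oddFamily, Finset.card_image_of_injOn, Finset.card_sigma]
  · simp only [Nat.card_Icc, Nat.add_sub_cancel]
  · rintro ⟨k, t⟩ hx ⟨k', t'⟩ hx' h
    simp only [Finset.coe_sigma, Set.mem_sigma_iff, Finset.mem_coe, Finset.mem_Icc] at hx hx'
    have hparts := (onesTwosPair_inj (by grind) (by grind) (by grind) (by grind)).1 h
    grind

theorem mem_evenFamily : m ∈ evenFamily n ↔ ∃ k t a, 0 < k ∧ 0 < t ∧ 2 * t ≤ a ∧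
    6 * k + 2 * t + a = n + 2 ∧ m = onesTwosPair (2 * k) (2 * k - 1) (2 * t) a := by
  simp only [evenFamily, Finset.mem_image, Finset.mem_sigma, Finset.mem_Icc, Sigma.exists]
  constructor
  · rintro ⟨k, t, hkt, rfl⟩
    exact ⟨k, t, n - 6 * k + 2 - 2 * t, by omega, by omega, by omega, by omega, rfl⟩
  · rintro ⟨k, t, a, hk, ht, hta, hsum, rfl⟩
    exact ⟨k, t, by omega, by congr; omega⟩

theorem mem_oddFamily : m ∈ oddFamily n ↔ ∃ k t a, 0 < k ∧ 0 < t ∧ 2 * t + 1 < a ∧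
    6 * k + 2 * t + a = n ∧ m = onesTwosPair (2 * k - 1) (2 * k) (2 * t + 1) a := by
  simp only [oddFamily, Finset.mem_image, Finset.mem_sigma, Finset.mem_Icc, Sigma.exists]
  constructor
  · rintro ⟨k, t, hkt, rfl⟩
    exact ⟨k, t, n - 6 * k - 2 * t, by omega, by omega, by omega, by omega, rfl⟩
  · rintro ⟨k, t, a, hk, ht, hta, hsum, rfl⟩
    exact ⟨k, t, by omega, by congr; omega⟩

theorem disjoint_evenFamily_oddFamily {n' : ℕ} : Disjoint (evenFamily n) (oddFamily n') := by
  rw [Finset.disjoint_left]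
  intro m heven hodd
  obtain ⟨k, t, a, -, ht, hta, -, rfl⟩ := mem_evenFamily.1 heven
  obtain ⟨k', t', a', -, ht', hta', -, h⟩ := mem_oddFamily.1 hodd
  have hparts := (onesTwosPair_inj (by omega) (by omega) (by omega) (by omega)).1 h
  omega

theorem singleton_notMem_evenFamily_union_oddFamily {a n' : ℕ} :
    {a} ∉ evenFamily n ∪ oddFamily n' := by
  rw [Finset.mem_union, mem_evenFamily, mem_oddFamily]
  rintro (⟨k, t, b, -, -, -, -, h⟩ | ⟨k, t, b, -, -, -, -, h⟩) <;>
    simpa [card_onesTwosPair] using congrArg Multiset.card h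

theorem mem_evenFamily_union_oddFamily (hev : n % 2 = 0) :
    m ∈ evenFamily n ∪ oddFamily n ↔ ∃ i j b a, 2 ≤ b ∧ b ≤ a ∧ a % 2 = 0 ∧
      j + 1 = i + 2 * (b % 2) ∧ i + 2 * j + b + a = n ∧ m = onesTwosPair i j b a := by
  rw [Finset.mem_union, mem_evenFamily, mem_oddFamily]
  constructor
  · rintro (⟨k, t, a, hk, ht, hta, hsum, hm⟩ | ⟨k, t, a, hk, ht, hta, hsum, hm⟩) <;>
      exact ⟨_, _, _, a, by omega, by omega, by omega, by omega, by omega, hm⟩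
  · rintro ⟨i, j, b, a, hb, hba, ha, hij, hsum, hm⟩
    obtain hb_even | hb_odd := Nat.mod_two_eq_zero_or_one b
    · obtain ⟨k, rfl⟩ : ∃ k, i = 2 * k := ⟨i / 2, by omega⟩
      obtain ⟨t, rfl⟩ : ∃ t, b = 2 * t := ⟨b / 2, by omega⟩
      obtain rfl : j = 2 * k - 1 := by omega
      exact .inl ⟨k, t, a, by omega, by omega, hba, by omega, hm⟩
    · obtain ⟨k, rfl⟩ : ∃ k, j = 2 * k := ⟨j / 2, by omega⟩
      obtain ⟨t, rfl⟩ : ∃ t, b = 2 * t + 1 := ⟨b / 2, by omega⟩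
      obtain rfl : i = 2 * k - 1 := by omega
      exact .inr ⟨k, t, a, by omega, by omega, by omega, by omega, hm⟩

theorem mem_insert_singleton_evenFamily_union_oddFamily (hn : 0 < n) (hev : n % 2 = 0) :
    m ∈ insert {n} (evenFamily n ∪ oddFamily n) ↔
      (∀ p ∈ m, 0 < p) ∧ m.sum = n ∧ IsLeftover m := by
  rw [Finset.mem_insert, mem_evenFamily_union_oddFamily hev]
  constructor
  · rintro (rfl | ⟨i, j, b, a, hb, hba, ha, hij, hsum, rfl⟩)
    · exact ⟨by simpa using hn, Multiset.sum_singleton n, isLeftover_singleton.2 hev⟩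
    · refine ⟨fun p hp => ?_, sum_onesTwosPair.trans hsum,
        (isLeftover_onesTwosPair hb hba).2 ⟨ha, hij⟩⟩
      rw [mem_onesTwosPair] at hp
      omega
  · rintro ⟨hpos, hsum, hm⟩
    obtain ⟨a, rfl⟩ | ⟨i, j, b, a, hb, hba, rfl⟩ := hm.eq_singleton_or_eq_onesTwosPair hpos
    · exact .inl (congrArg _ (by simpa using hsum))
    · obtain ⟨ha, hij⟩ := (isLeftover_onesTwosPair hb hba).1 hm
      exact .inr ⟨i, j, b, a, hb, hba, ha, hij, sum_onesTwosPair.symm.trans hsum, rfl⟩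

end families

/-- For every even positive integer `n`, the number of partitions `λ` of `n` such that the
number of even parts exceeds the number of odd parts by exactly `1`, the largest part is
even, and at most two parts of `λ` are greater than `2`, equals
`1 + Σ_{k=1}^{⌊(n-2)/6⌋} ⌊(n-6k+2)/4⌋ + Σ_{k=1}^{⌊(n-6)/6⌋} ⌊(n-6k-2)/4⌋`. -/
theorem card_leftover_even (n : ℕ) (hn : 0 < n) (hev : Even n) :
    Nat.card {l : n.Partition //
        l.evenCount = l.oddCount + 1 ∧ l.parts.sup % 2 = 0 ∧
          (l.parts.filter (fun p => 2 < p)).card ≤ 2} =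
      1 + ∑ k ∈ Finset.Icc 1 ((n - 2) / 6), (n - 6 * k + 2) / 4
        + ∑ k ∈ Finset.Icc 1 ((n - 6) / 6), (n - 6 * k - 2) / 4 := by
  have hmem (m : Multiset ℕ) := mem_insert_singleton_evenFamily_union_oddFamily (m := m) hn
    (Nat.even_iff.1 hev)
  calc
    _ = (insert {n} (evenFamily n ∪ oddFamily n)).card := card_subtype_partition_eq_card hmem
    _ = 1 + (evenFamily n).card + (oddFamily n).card := by
      rw [Finset.card_insert_of_notMem singleton_notMem_evenFamily_union_oddFamily,
        Finset.card_union_of_disjoint disjoint_evenFamily_oddFamily, add_comm, add_assoc]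
    _ = _ := by rw [card_evenFamily, card_oddFamily]
end

section
/- For every positive integer n, let A(n) be the set of partitions λ of n with ℓ_e(λ) > ℓ_o(λ), excluding those partitions for which ℓ_e(λ) = ℓ_o(λ) + 1, the largest part is even, and at most two parts are greater than 2; and let B(n) be the set of partitions of n having exactly two even parts, all odd parts equal to 1, and more odd parts than even parts. Then |A(n)| + |B(n)| ≤ p_o(n), where p_o(n) is the number of partitions of n with more odd parts than even parts. -/
/-!
Exchanging the parts `2k - 1` and `2k` turns a partition with more even than odd parts into a
multiset with `a > 0` more odd than even members, whose sum has dropped by `a`. Adding `a` to the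
largest member `M` restores the sum. Afterwards the largest part exceeds all others by at least
`a`, and `a` can be read off from the new parity counts, so the step is injective. It fails only if
`a = 1` and `M` is odd, as the even parts would then be in the majority; in that case some `1`s are
added instead, and the result is recognised by its small parts, its bias or its gap below the
largest part.

A partition in `B(n)` which is hit by this injection has the form `x, q, 1, …, 1` with `x` and `q`
even. Unless `x = q = 2`, the gap `x - q` is so large that there is room for
`q + 1, q + 1, 3, …, 3, 1, …, 1` with about half as many `3`s as there were `1`s. Having no gap
between its two largest parts, the new partition is not hit.
-/

namespace ParityBias

open Multiset

lemma sup_mem {α : Type*} [LinearOrder α] [OrderBot α] {s : Multiset α} (h : s ≠ 0) :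
    s.sup ∈ s := by
  induction s using Multiset.induction with
  | empty => exact absurd rfl h
  | cons a s ih =>
    rcases eq_or_ne s 0 with rfl | hs
    · simp
    · rw [sup_cons, mem_cons]
      rcases max_choice a s.sup with hmax | hmax <;> rw [hmax]
      · exact Or.inl rfl
      · exact Or.inr (ih hs)

lemma exists_cons_sup_le {α : Type*} [LinearOrder α] [OrderBot α] {s : Multiset α} (h : s ≠ 0) :
    ∃ a t, s = a ::ₘ t ∧ t.sup ≤ a :=
  ⟨s.sup, s.erase s.sup, (cons_erase (sup_mem h)).symm, sup_mono (erase_subset _ _)⟩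

lemma sup_cons_of_sup_le {α : Type*} [SemilatticeSup α] [OrderBot α] {a : α} {s : Multiset α}
    (h : s.sup ≤ a) : (a ::ₘ s).sup = a := by
  rw [sup_cons, sup_eq_left.2 h]

lemma ncard_add_ncard_le {α : Type*} {A B P : Set α} {f g : α → α} (hP : P.Finite)
    (hf : Set.MapsTo f A P) (hf' : Set.InjOn f A) (hB : B ⊆ P)
    (hg : Set.MapsTo g (f '' A ∩ B) (P \ (f '' A ∪ B))) (hg' : Set.InjOn g (f '' A ∩ B)) :
    A.ncard + B.ncard ≤ P.ncard := by
  have hsub : f '' A ∪ B ⊆ P := Set.union_subset hf.image_subset hB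
  calc A.ncard + B.ncard
      = (f '' A).ncard + B.ncard := by rw [hf'.ncard_image]
    _ = (f '' A ∩ B).ncard + (f '' A ∪ B).ncard := by
        rw [add_comm (f '' A ∩ B).ncard, Set.ncard_union_add_ncard_inter _ _
          (hP.subset hf.image_subset) (hP.subset hB)]
    _ ≤ (P \ (f '' A ∪ B)).ncard + (f '' A ∪ B).ncard := by
        exact Nat.add_le_add_right (Set.ncard_le_ncard_of_injOn g hg hg' hP.sdiff) _
    _ = P.ncard := Set.ncard_sdiff_add_ncard_of_subset hsub hP

/-- The number of odd members of a multiset, `ℓ_o`. -/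
def numOdd (s : Multiset ℕ) : ℕ := (s.filter fun p => p % 2 = 1).card

/-- The number of even members of a multiset, `ℓ_e`. -/
def numEven (s : Multiset ℕ) : ℕ := (s.filter fun p => p % 2 = 0).card

/-- The parity bias `ℓ_o - ℓ_e`, truncated at `0`. -/
def excess (s : Multiset ℕ) : ℕ := numOdd s - numEven s

@[simp] lemma numOdd_zero : numOdd 0 = 0 := rfl

@[simp] lemma numEven_zero : numEven 0 = 0 := rfl

@[simp] lemma numOdd_cons (x : ℕ) (s : Multiset ℕ) : numOdd (x ::ₘ s) = numOdd s + x % 2 := by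
  rcases Nat.mod_two_eq_zero_or_one x with h | h <;> simp [numOdd, h]

@[simp] lemma numEven_cons (x : ℕ) (s : Multiset ℕ) :
    numEven (x ::ₘ s) = numEven s + (x + 1) % 2 := by
  rcases Nat.mod_two_eq_zero_or_one x with h | h <;> simp [numEven, h, Nat.add_mod]

@[simp] lemma numOdd_add (s t : Multiset ℕ) : numOdd (s + t) = numOdd s + numOdd t := by
  simp [numOdd]

@[simp] lemma numEven_add (s t : Multiset ℕ) : numEven (s + t) = numEven s + numEven t := by
  simp [numEven]

lemma numOdd_replicate (k x : ℕ) : numOdd (replicate k x) = k * (x % 2) := by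
  induction k with
  | zero => simp
  | succ k ih => rw [replicate_succ, numOdd_cons, ih]; ring

lemma numEven_replicate (k x : ℕ) : numEven (replicate k x) = k * ((x + 1) % 2) := by
  induction k with
  | zero => simp
  | succ k ih => rw [replicate_succ, numEven_cons, ih]; ring

lemma sup_replicate_le {α : Type*} [SemilatticeSup α] [OrderBot α] (k : ℕ) (x : α) :
    (replicate k x).sup ≤ x :=
  Multiset.sup_le.2 fun _ h => (eq_of_mem_replicate h).le

/-- The involution of the positive integers exchanging `2 * k - 1` and `2 * k`. -/
def swapParity (x : ℕ) : ℕ := if x % 2 = 0 then x - 1 else x + 1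

lemma swapParity_pos {x : ℕ} (h : 0 < x) : 0 < swapParity x := by
  unfold swapParity; split_ifs <;> omega

lemma swapParity_swapParity {x : ℕ} (h : 0 < x) : swapParity (swapParity x) = x := by
  unfold swapParity; split_ifs <;> omega

lemma swapParity_add_succ_mod_two {x : ℕ} (h : 0 < x) :
    swapParity x + (x + 1) % 2 = x + x % 2 := by
  unfold swapParity; split_ifs <;> omega

lemma map_swapParity_map_swapParity {s : Multiset ℕ} (h : ∀ x ∈ s, 0 < x) :
    (s.map swapParity).map swapParity = s := by
  rw [map_map]
  exact (map_congr rfl fun x hx => swapParity_swapParity (h x hx)).trans (map_id s)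

lemma pos_of_mem_map_swapParity {s : Multiset ℕ} (h : ∀ x ∈ s, 0 < x) :
    ∀ x ∈ s.map swapParity, 0 < x := by
  intro x hx
  obtain ⟨y, hy, rfl⟩ := mem_map.1 hx
  exact swapParity_pos (h y hy)

lemma numOdd_map_swapParity {s : Multiset ℕ} (h : ∀ x ∈ s, 0 < x) :
    numOdd (s.map swapParity) = numEven s := by
  induction s using Multiset.induction with
  | empty => simp
  | cons a s ih =>
    simp only [forall_mem_cons, map_cons, numOdd_cons, numEven_cons] at h ⊢
    rw [ih h.2]
    unfold swapParity; split_ifs <;> omega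

lemma numEven_map_swapParity {s : Multiset ℕ} (h : ∀ x ∈ s, 0 < x) :
    numEven (s.map swapParity) = numOdd s := by
  rw [← numOdd_map_swapParity (pos_of_mem_map_swapParity h), map_swapParity_map_swapParity h]

lemma sum_map_swapParity_add_numEven {s : Multiset ℕ} (h : ∀ x ∈ s, 0 < x) :
    (s.map swapParity).sum + numEven s = s.sum + numOdd s := by
  induction s using Multiset.induction with
  | empty => simp
  | cons a s ih =>
    simp only [forall_mem_cons, map_cons, numOdd_cons, numEven_cons, sum_cons] at h ⊢
    have := swapParity_add_succ_mod_two h.1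
    have := ih h.2
    omega

/-- Raises the sum of a multiset with positive excess by that excess, in a way that `deplete` can
undo: the excess is added to the largest member `M`, except where this would destroy the parity
bias. The three exceptional branches are chosen such that their results are distinguished from
those of the main branch by their largest member, their excess, and the gap below their largest
member. -/
def replenish (s : Multiset ℕ) : Multiset ℕ :=
  let M := s.sup
  let r := s.erase M
  if excess s = 1 ∧ M % 2 = 1 then
    if r.sup ≤ 2 then r + replicate (M + 1) 1
    else if M ≤ r.sup + 1 then M ::ₘ 1 ::ₘ r
    else (M - 2) ::ₘ 2 ::ₘ 1 ::ₘ r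
  else (M + excess s) ::ₘ r

/-- The amount by which `replenish` must have raised the largest member to produce `v`, if it did
so: adding `a` to `M` changes the excess only if `a` is odd, by `2` in the direction given by the
parity of `M + a`. -/
def gain (v : Multiset ℕ) : ℕ :=
  if excess v % 2 = 0 then excess v else if v.sup % 2 = 1 then excess v - 2 else excess v + 2

/-- The left inverse of `replenish` on multisets of positive integers with positive excess. -/
def deplete (v : Multiset ℕ) : Multiset ℕ :=
  let x := v.sup
  let s := v.erase x
  if x ≤ 2 then (excess v - 1) ::ₘ (v - replicate (excess v) 1)
  else if excess v = 2 ∧ x ≤ s.sup + 1 then v.erase 1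
  else if excess v = 1 ∧ x % 2 = 1 then (x + 2) ::ₘ ((s.erase 2).erase 1)
  else (x - gain v) ::ₘ s

lemma replenish_cons {M : ℕ} {r : Multiset ℕ} (hr : r.sup ≤ M) :
    replenish (M ::ₘ r) =
      if excess (M ::ₘ r) = 1 ∧ M % 2 = 1 then
        if r.sup ≤ 2 then r + replicate (M + 1) 1
        else if M ≤ r.sup + 1 then M ::ₘ 1 ::ₘ r
        else (M - 2) ::ₘ 2 ::ₘ 1 ::ₘ r
      else (M + excess (M ::ₘ r)) ::ₘ r := by
  simp only [replenish, sup_cons_of_sup_le hr, erase_cons_head]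

lemma deplete_cons {x : ℕ} {s : Multiset ℕ} (hs : s.sup ≤ x) :
    deplete (x ::ₘ s) =
      if x ≤ 2 then (excess (x ::ₘ s) - 1) ::ₘ (x ::ₘ s - replicate (excess (x ::ₘ s)) 1)
      else if excess (x ::ₘ s) = 2 ∧ x ≤ s.sup + 1 then (x ::ₘ s).erase 1
      else if excess (x ::ₘ s) = 1 ∧ x % 2 = 1 then (x + 2) ::ₘ ((s.erase 2).erase 1)
      else (x - gain (x ::ₘ s)) ::ₘ s := by
  simp only [deplete, sup_cons_of_sup_le hs, erase_cons_head]

lemma ne_zero_of_excess_pos {s : Multiset ℕ} (h : 0 < excess s) : s ≠ 0 := by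
  rintro rfl
  simp [excess] at h

lemma sum_replenish {s : Multiset ℕ} (h : 0 < excess s) :
    (replenish s).sum = s.sum + excess s := by
  obtain ⟨M, r, rfl, hr⟩ := exists_cons_sup_le (ne_zero_of_excess_pos h)
  rw [replenish_cons hr]
  split_ifs <;> simp <;> omega

lemma pos_of_mem_replenish {s : Multiset ℕ} (hs : ∀ x ∈ s, 0 < x) (h : 0 < excess s) :
    ∀ x ∈ replenish s, 0 < x := by
  obtain ⟨M, r, rfl, hr⟩ := exists_cons_sup_le (ne_zero_of_excess_pos h)
  rw [forall_mem_cons] at hs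
  have hM : 0 < M := hs.1
  rw [replenish_cons hr]
  split_ifs
  · intro x hx
    rcases mem_add.1 hx with hx | hx
    · exact hs.2 x hx
    · exact (eq_of_mem_replicate hx).symm ▸ one_pos
  · exact forall_mem_cons.2 ⟨hM, forall_mem_cons.2 ⟨one_pos, hs.2⟩⟩
  · exact forall_mem_cons.2 ⟨by omega, forall_mem_cons.2 ⟨two_pos,
      forall_mem_cons.2 ⟨one_pos, hs.2⟩⟩⟩
  · exact forall_mem_cons.2 ⟨by omega, hs.2⟩

lemma excess_replenish_pos {s : Multiset ℕ} (h : 0 < excess s) : 0 < excess (replenish s) := by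
  obtain ⟨M, r, rfl, hr⟩ := exists_cons_sup_le (ne_zero_of_excess_pos h)
  rw [replenish_cons hr]
  simp only [excess, numOdd_cons, numEven_cons] at h ⊢
  split_ifs <;> simp [numOdd_replicate, numEven_replicate] <;> omega

lemma gain_cons_add {M : ℕ} {r : Multiset ℕ} (hr : r.sup ≤ M) (h : 0 < excess (M ::ₘ r))
    (hmain : ¬(excess (M ::ₘ r) = 1 ∧ M % 2 = 1)) :
    gain ((M + excess (M ::ₘ r)) ::ₘ r) = excess (M ::ₘ r) := by
  rw [gain, sup_cons_of_sup_le (by omega)]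
  simp only [excess, numOdd_cons, numEven_cons] at h hmain ⊢
  split_ifs <;> omega

lemma excess_add_replicate_one {M : ℕ} {r : Multiset ℕ} (h : excess (M ::ₘ r) = 1)
    (hM : M % 2 = 1) : excess (r + replicate (M + 1) 1) = M + 1 := by
  simp only [excess, numOdd_cons, numEven_cons] at h
  simp only [excess, numOdd_add, numEven_add, numOdd_replicate, numEven_replicate]
  omega

lemma sup_add_replicate_one_le {r : Multiset ℕ} (h : r.sup ≤ 2) (k : ℕ) :
    (r + replicate k 1).sup ≤ 2 := by
  rw [Multiset.sup_add, _root_.sup_le_iff]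
  exact ⟨h, (sup_replicate_le k 1).trans one_le_two⟩

lemma sup_two_cons_one_cons {r : Multiset ℕ} (h : 2 < r.sup) : (2 ::ₘ 1 ::ₘ r).sup = r.sup := by
  rw [sup_cons, sup_cons, sup_eq_right.2 (by omega : 1 ≤ r.sup), sup_eq_right.2 h.le]

lemma replenish_cases {s : Multiset ℕ} (hs : ∀ x ∈ s, 0 < x) (h : 0 < excess s) :
    ((replenish s).sup ≤ 2 ∧ excess (replenish s) % 2 = 0) ∨
    (2 < (replenish s).sup ∧ (replenish s).sup % 2 = 1 ∧ excess (replenish s) ≤ 2) ∨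
    (2 < (replenish s).sup ∧ 0 < gain (replenish s) ∧
      ((replenish s).erase (replenish s).sup).sup + gain (replenish s) ≤ (replenish s).sup) := by
  obtain ⟨M, r, rfl, hr⟩ := exists_cons_sup_le (ne_zero_of_excess_pos h)
  have hM : 0 < M := hs M (mem_cons_self M r)
  rw [replenish_cons hr]
  split_ifs with hexc hr2 hgap
  · refine Or.inl ⟨sup_add_replicate_one_le hr2 _, ?_⟩
    rw [excess_add_replicate_one hexc.1 hexc.2]
    omega
  · have hx : (M ::ₘ 1 ::ₘ r).sup = M := by
      rw [cons_swap, sup_cons, sup_cons_of_sup_le hr, sup_eq_right]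
      omega
    simp only [hx, excess, numOdd_cons, numEven_cons] at hexc ⊢
    omega
  · have hx : ((M - 2) ::ₘ 2 ::ₘ 1 ::ₘ r).sup = M - 2 := by
      apply sup_cons_of_sup_le
      rw [sup_two_cons_one_cons (by omega)]
      omega
    simp only [hx, excess, numOdd_cons, numEven_cons] at hexc ⊢
    omega
  · refine Or.inr (Or.inr ?_)
    rw [gain_cons_add hr h hexc, sup_cons_of_sup_le (by omega), erase_cons_head]
    omega

lemma deplete_replenish {s : Multiset ℕ} (hs : ∀ x ∈ s, 0 < x) (h : 0 < excess s) :
    deplete (replenish s) = s := by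
  obtain ⟨M, r, rfl, hr⟩ := exists_cons_sup_le (ne_zero_of_excess_pos h)
  have hM : 0 < M := hs M (mem_cons_self M r)
  rw [replenish_cons hr]
  split_ifs with hexc hr2 hgap
  · rw [deplete, if_pos (sup_add_replicate_one_le hr2 _), excess_add_replicate_one hexc.1 hexc.2,
      Multiset.add_sub_cancel_right, Nat.add_sub_cancel]
  · have hsup : (1 ::ₘ r).sup = r.sup := by simp; omega
    have hexc' : excess (M ::ₘ 1 ::ₘ r) = 2 := by
      simp only [excess, numOdd_cons, numEven_cons] at hexc ⊢
      omega
    rw [deplete_cons (by omega), if_neg (by omega), if_pos ⟨hexc', by omega⟩, cons_swap,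
      erase_cons_head]
  · have hsup := sup_two_cons_one_cons (by omega : 2 < r.sup)
    have hexc' : excess ((M - 2) ::ₘ 2 ::ₘ 1 ::ₘ r) = 1 := by
      simp only [excess, numOdd_cons, numEven_cons] at hexc ⊢
      omega
    rw [deplete_cons (by omega), if_neg (by omega), if_neg (by omega),
      if_pos ⟨hexc', by omega⟩, erase_cons_head, erase_cons_head, Nat.sub_add_cancel (by omega)]
  · have hgain := gain_cons_add hr h hexc
    have hne : ¬(excess ((M + excess (M ::ₘ r)) ::ₘ r) = 2 ∧
        M + excess (M ::ₘ r) ≤ r.sup + 1) := by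
      simp only [excess, numOdd_cons, numEven_cons] at h hexc ⊢
      omega
    have hne' : ¬(excess ((M + excess (M ::ₘ r)) ::ₘ r) = 1 ∧
        (M + excess (M ::ₘ r)) % 2 = 1) := by
      simp only [excess, numOdd_cons, numEven_cons] at h hexc ⊢
      omega
    rw [deplete_cons (by omega), if_neg (by omega), if_neg hne, if_neg hne', hgain,
      Nat.add_sub_cancel]

/-- The multisets of parts of the partitions of `n`. -/
def partitions (n : ℕ) : Set (Multiset ℕ) := {s | (∀ x ∈ s, 0 < x) ∧ s.sum = n}

lemma natCard_partition_eq_ncard (n : ℕ) (p : Multiset ℕ → Prop) :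
    Nat.card {l : n.Partition // p l.parts} = {s ∈ partitions n | p s}.ncard := by
  have himage : Nat.Partition.parts '' {l : n.Partition | p l.parts} =
      {s ∈ partitions n | p s} := by
    ext s
    constructor
    · rintro ⟨l, hl, rfl⟩
      exact ⟨⟨fun _ hx => l.parts_pos hx, l.parts_sum⟩, hl⟩
    · rintro ⟨⟨hpos, hsum⟩, hs⟩
      exact ⟨⟨s, fun {x} hx => hpos x hx, hsum⟩, hs, rfl⟩
  rw [← himage, Set.ncard_image_of_injective _ fun _ _ => Nat.Partition.ext]
  rfl

lemma finite_partitions (n : ℕ) : (partitions n).Finite :=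
  (Set.finite_range (Nat.Partition.parts (n := n))).subset fun s hs =>
    ⟨⟨s, fun {x} hx => hs.1 x hx, hs.2⟩, rfl⟩

/-- The partitions of `n` with more even than odd parts. -/
def evenBiased (n : ℕ) : Set (Multiset ℕ) := {s ∈ partitions n | numOdd s < numEven s}

/-- The partitions of `n` with more odd than even parts, counted by `p_o(n)`. -/
def oddBiased (n : ℕ) : Set (Multiset ℕ) := {s ∈ partitions n | numEven s < numOdd s}

/-- The set `B(n)` of odd-biased partitions of `n` with two even parts whose odd parts are `1`. -/
def twoEvens (n : ℕ) : Set (Multiset ℕ) :=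
  {s ∈ partitions n | numEven s = 2 ∧ (∀ p ∈ s, p % 2 = 1 → p = 1) ∧ numEven s < numOdd s}

/-- The parity swap followed by the restoration of the sum, an injection of `evenBiased n` into
`oddBiased n`. -/
def transfer (s : Multiset ℕ) : Multiset ℕ := replenish (s.map swapParity)

lemma excess_map_swapParity_pos {n : ℕ} {s : Multiset ℕ} (hs : s ∈ evenBiased n) :
    0 < excess (s.map swapParity) := by
  obtain ⟨⟨hpos, -⟩, hlt⟩ := hs
  rw [excess, numOdd_map_swapParity hpos, numEven_map_swapParity hpos]
  omega

lemma mapsTo_transfer (n : ℕ) : Set.MapsTo transfer (evenBiased n) (oddBiased n) := by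
  intro s hs
  have hexc := excess_map_swapParity_pos hs
  obtain ⟨⟨hpos, hsum⟩, hlt⟩ := hs
  refine ⟨⟨pos_of_mem_replenish (pos_of_mem_map_swapParity hpos) hexc, ?_⟩,
    Nat.sub_pos_iff_lt.1 (excess_replenish_pos hexc)⟩
  rw [transfer, sum_replenish hexc, excess, numOdd_map_swapParity hpos,
    numEven_map_swapParity hpos]
  have := sum_map_swapParity_add_numEven hpos
  omega

lemma injOn_transfer (n : ℕ) : Set.InjOn transfer (evenBiased n) := by
  refine Set.LeftInvOn.injOn (f₁' := fun v => (deplete v).map swapParity) fun s hs => ?_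
  simp only [transfer]
  rw [deplete_replenish (pos_of_mem_map_swapParity hs.1.1)
    (excess_map_swapParity_pos hs), map_swapParity_map_swapParity hs.1.1]

lemma cases_of_mem_image_transfer {n : ℕ} {v : Multiset ℕ} (hv : v ∈ transfer '' evenBiased n) :
    (v.sup ≤ 2 ∧ excess v % 2 = 0) ∨ (2 < v.sup ∧ v.sup % 2 = 1 ∧ excess v ≤ 2) ∨
      (2 < v.sup ∧ 0 < gain v ∧ (v.erase v.sup).sup + gain v ≤ v.sup) := by
  obtain ⟨s, hs, rfl⟩ := hv
  exact replenish_cases (pos_of_mem_map_swapParity hs.1.1) (excess_map_swapParity_pos hs)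

lemma filter_not_even_eq_replicate {s : Multiset ℕ} (h : ∀ p ∈ s, p % 2 = 1 → p = 1) :
    s.filter (fun p => ¬p % 2 = 0) = replicate (numOdd s) 1 := by
  simp only [Nat.mod_two_ne_zero]
  exact eq_replicate.2 ⟨rfl, fun p hp => h p (mem_filter.1 hp).1 (mem_filter.1 hp).2⟩

lemma exists_eq_cons_cons_replicate {s : Multiset ℕ} (h2 : numEven s = 2)
    (h1 : ∀ p ∈ s, p % 2 = 1 → p = 1) :
    ∃ x q, q ≤ x ∧ x % 2 = 0 ∧ q % 2 = 0 ∧ s = x ::ₘ q ::ₘ replicate (numOdd s) 1 := by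
  obtain ⟨x, q, hxq⟩ := card_eq_two.1 h2
  have hsplit : s = {x, q} + replicate (numOdd s) 1 := by
    rw [← hxq, ← filter_not_even_eq_replicate h1, filter_add_not]
  have heven : ∀ p ∈ ({x, q} : Multiset ℕ), p % 2 = 0 := fun p hp => by
    rw [← hxq] at hp
    exact (mem_filter.1 hp).2
  have hx : x % 2 = 0 := heven x (by simp)
  have hq : q % 2 = 0 := heven q (by simp)
  rcases le_total q x with hle | hle
  · exact ⟨x, q, hle, hx, hq, hsplit⟩
  · exact ⟨q, x, hle, hq, hx, hsplit.trans (by rw [pair_comm]; rfl)⟩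

lemma exists_eq_of_mem_image_transfer_inter_twoEvens {n : ℕ} {v : Multiset ℕ}
    (hv : v ∈ transfer '' evenBiased n ∩ twoEvens n) :
    ∃ x q k, v = x ::ₘ q ::ₘ replicate k 1 ∧ 2 ≤ q ∧ q ≤ x ∧ 2 < k ∧ x % 2 = 0 ∧ q % 2 = 0 ∧
      (x = 2 ∧ k % 2 = 0 ∨ 2 < x ∧ q + 2 * ((k - 1) / 2) ≤ x) := by
  obtain ⟨himage, ⟨hpos, -⟩, h2, h1, hlt⟩ := hv
  have hcases := cases_of_mem_image_transfer himage
  obtain ⟨x, q, hqx, hx, hq, hv⟩ := exists_eq_cons_cons_replicate h2 h1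
  rw [h2] at hlt
  have hexc : excess v = numOdd v - 2 := by rw [excess, h2]
  have hq0 : 0 < q := hpos q (hv ▸ by simp)
  have hr : (q ::ₘ replicate (numOdd v) 1).sup = q :=
    sup_cons_of_sup_le ((sup_replicate_le _ 1).trans hq0)
  have hsup : v.sup = x := by rw [hv, sup_cons_of_sup_le (hr.trans_le hqx)]
  have herase : (v.erase v.sup).sup = q := by
    rw [hsup, ← hr]
    conv_lhs => rw [hv, erase_cons_head]
  rw [herase, gain, hsup, hexc] at hcases
  refine ⟨x, q, numOdd v, hv, by omega, hqx, hlt, hx, hq, ?_⟩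
  split_ifs at hcases <;> omega

/-- The partition with parts `q + 1, q + 1, 3, …, 3, 1, …, 1`, where `3` is repeated `b` times and
`1` is repeated `m` times. -/
def twins (q b m : ℕ) : Multiset ℕ :=
  (q + 1) ::ₘ (q + 1) ::ₘ (replicate b 3 + replicate m 1)

section twins

variable {q : ℕ} (b m : ℕ)

lemma sum_twins : (twins q b m).sum = 2 * (q + 1) + 3 * b + m := by
  simp [twins]; ring

lemma pos_of_mem_twins : ∀ x ∈ twins q b m, 0 < x := by
  simp only [twins, mem_cons, mem_add, mem_replicate]
  omega

lemma numOdd_twins (hq : q % 2 = 0) : numOdd (twins q b m) = b + m + 2 := by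
  simp only [twins, numOdd_cons, numOdd_add, numOdd_replicate]
  omega

lemma numEven_twins (hq : q % 2 = 0) : numEven (twins q b m) = 0 := by
  simp only [twins, numEven_cons, numEven_add, numEven_replicate]
  omega

lemma sup_erase_twins (hq : 2 ≤ q) : ((twins q b m).erase (q + 1)).sup = q + 1 := by
  rw [twins, erase_cons_head]
  refine sup_cons_of_sup_le (Multiset.sup_le.2 fun x hx => ?_)
  simp only [mem_add, mem_replicate] at hx
  omega

lemma sup_twins (hq : 2 ≤ q) : (twins q b m).sup = q + 1 := by
  have := sup_erase_twins b m hq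
  rw [twins, erase_cons_head] at this
  exact sup_cons_of_sup_le this.le

end twins

/-- Sends the elements of `twoEvens n` that are hit by `transfer` to odd-biased partitions that are
neither in `twoEvens n` nor hit by `transfer`. The parts `2, 2, 1, …, 1` have no gap to draw on and
are treated separately. -/
def evade (v : Multiset ℕ) : Multiset ℕ :=
  if v.sup = 2 then 2 ::ₘ replicate (v.sum - 2) 1
  else
    let q := (v.erase v.sup).sup
    let b := (numOdd v - 1) / 2
    twins q b (v.sum - (2 * (q + 1) + 3 * b))

lemma evade_cons_cons_replicate {x q : ℕ} (k : ℕ) (hq : 2 ≤ q) (hqx : q ≤ x) (hx : x % 2 = 0)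
    (hq' : q % 2 = 0) :
    evade (x ::ₘ q ::ₘ replicate k 1) =
      if x = 2 then 2 ::ₘ replicate (k + 2) 1
      else twins q ((k - 1) / 2) (x + q + k - (2 * (q + 1) + 3 * ((k - 1) / 2))) := by
  have hr : (q ::ₘ replicate k 1).sup = q :=
    sup_cons_of_sup_le ((sup_replicate_le _ 1).trans (by omega))
  have hodd : numOdd (x ::ₘ q ::ₘ replicate k 1) = k := by
    simp [numOdd_replicate, hx, hq']
  have hsum : (x ::ₘ q ::ₘ replicate k 1).sum = x + q + k := by simp [add_assoc]
  rw [evade, sup_cons_of_sup_le (hr.trans_le hqx), erase_cons_head, hr, hodd, hsum]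
  split_ifs with h
  · rw [show x + q + k - 2 = k + 2 by omega]
  · rfl

lemma two_cons_replicate_mem_sdiff {n k : ℕ} (hk : 2 ≤ k) (hk2 : k % 2 = 0) (hn : k + 2 = n) :
    2 ::ₘ replicate k 1 ∈ oddBiased n \ (transfer '' evenBiased n ∪ twoEvens n) := by
  have hodd : numOdd (2 ::ₘ replicate k 1) = k := by simp [numOdd_replicate]
  have heven : numEven (2 ::ₘ replicate k 1) = 1 := by simp [numEven_replicate]
  have hsup : (2 ::ₘ replicate k 1).sup = 2 :=
    sup_cons_of_sup_le ((sup_replicate_le _ 1).trans one_le_two)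
  have hpos : ∀ x ∈ 2 ::ₘ replicate k 1, 0 < x := by simp [mem_replicate]
  have hsum : (2 ::ₘ replicate k 1).sum = n := by simp [← hn, add_comm]
  refine ⟨⟨⟨hpos, hsum⟩, by omega⟩, ?_⟩
  rintro (himage | htwo)
  · have := cases_of_mem_image_transfer himage
    rw [hsup, excess] at this
    omega
  · have := htwo.2.1
    omega

lemma twins_mem_sdiff {n q b m : ℕ} (hq : 2 ≤ q) (hq2 : q % 2 = 0) (hbm : 0 < b + m)
    (hn : 2 * (q + 1) + 3 * b + m = n) :
    twins q b m ∈ oddBiased n \ (transfer '' evenBiased n ∪ twoEvens n) := by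
  have hodd := numOdd_twins b m hq2
  have heven := numEven_twins b m hq2
  refine ⟨⟨⟨pos_of_mem_twins b m, (sum_twins b m).trans hn⟩, by omega⟩, ?_⟩
  rintro (himage | htwo)
  · have := cases_of_mem_image_transfer himage
    rw [sup_twins b m hq, sup_erase_twins b m hq, excess] at this
    omega
  · have := htwo.2.1
    omega

lemma mapsTo_evade (n : ℕ) : Set.MapsTo evade (transfer '' evenBiased n ∩ twoEvens n)
    (oddBiased n \ (transfer '' evenBiased n ∪ twoEvens n)) := by
  intro v hv
  have hsum := hv.2.1.2
  obtain ⟨x, q, k, rfl, hq, hqx, hk, hx, hq2, hcase⟩ :=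
    exists_eq_of_mem_image_transfer_inter_twoEvens hv
  simp only [sum_cons, sum_replicate, smul_eq_mul, mul_one] at hsum
  rw [evade_cons_cons_replicate k hq hqx hx hq2]
  rcases hcase with ⟨rfl, hk2⟩ | ⟨hx2, hgap⟩
  · rw [if_pos rfl]
    exact two_cons_replicate_mem_sdiff (by omega) (by omega) (by omega)
  · rw [if_neg (by omega)]
    exact twins_mem_sdiff hq hq2 (by omega) (by omega)

lemma injOn_evade (n : ℕ) : Set.InjOn evade (transfer '' evenBiased n ∩ twoEvens n) := by
  intro v hv v' hv' hvv'
  have hsum := hv.2.1.2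
  have hsum' := hv'.2.1.2
  obtain ⟨x, q, k, rfl, hq, hqx, hk, hx, hq2, hcase⟩ :=
    exists_eq_of_mem_image_transfer_inter_twoEvens hv
  obtain ⟨x', q', k', rfl, hq', hqx', hk', hx', hq2', hcase'⟩ :=
    exists_eq_of_mem_image_transfer_inter_twoEvens hv'
  simp only [sum_cons, sum_replicate, smul_eq_mul, mul_one] at hsum hsum'
  rw [evade_cons_cons_replicate k hq hqx hx hq2,
    evade_cons_cons_replicate k' hq' hqx' hx' hq2'] at hvv'
  have hodd := congrArg numOdd hvv'
  have heven := congrArg numEven hvv'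
  have hsup := congrArg Multiset.sup hvv'
  suffices x = x' ∧ q = q' ∧ k = k' by rw [this.1, this.2.1, this.2.2]
  split_ifs at hodd heven hsup <;>
    simp only [numOdd_cons, numEven_cons, numOdd_replicate, numEven_replicate, numOdd_twins,
      numEven_twins, sup_twins, hq, hq', hq2, hq2'] at hodd heven hsup <;> omega

end ParityBias

open ParityBias in
theorem card_A_add_card_B_le_po_general (n : ℕ) :
    Nat.card {l : n.Partition // l.oddCount < l.evenCount} +
      Nat.card {l : n.Partition //
        l.evenCount = 2 ∧ (∀ p ∈ l.parts, p % 2 = 1 → p = 1) ∧ l.evenCount < l.oddCount} ≤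
      Nat.card {l : n.Partition // l.evenCount < l.oddCount} := by
  have hA : Nat.card {l : n.Partition // l.oddCount < l.evenCount} = (evenBiased n).ncard :=
    natCard_partition_eq_ncard n fun s => numOdd s < numEven s
  have hB : Nat.card {l : n.Partition // l.evenCount = 2 ∧
      (∀ p ∈ l.parts, p % 2 = 1 → p = 1) ∧ l.evenCount < l.oddCount} = (twoEvens n).ncard :=
    natCard_partition_eq_ncard n fun s =>
      numEven s = 2 ∧ (∀ p ∈ s, p % 2 = 1 → p = 1) ∧ numEven s < numOdd s
  have hP : Nat.card {l : n.Partition // l.evenCount < l.oddCount} = (oddBiased n).ncard :=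
    natCard_partition_eq_ncard n fun s => numEven s < numOdd s
  rw [hA, hB, hP]
  exact ncard_add_ncard_le ((finite_partitions n).subset fun _ hs => hs.1) (mapsTo_transfer n)
    (injOn_transfer n) (fun _ hs => ⟨hs.1, hs.2.2.2⟩) (mapsTo_evade n) (injOn_evade n)

/-- For every positive integer `n`: let `A n` be the set of partitions of `n` with more even
parts than odd parts, excluding those for which the number of even parts exceeds the
number of odd parts by exactly `1`, the largest part is even, and at most two parts are
greater than `2`; let `B n` be the set of partitions of `n` with exactly two even parts,
all odd parts equal to `1`, and more odd parts than even parts.  Then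
`|A n| + |B n| ≤ p_o(n)`. -/
theorem card_A_add_card_B_le_po (n : ℕ) (hn : 0 < n) :
    Nat.card {l : n.Partition //
        l.oddCount < l.evenCount ∧
          ¬(l.evenCount = l.oddCount + 1 ∧ l.parts.sup % 2 = 0 ∧
              (l.parts.filter (fun p => 2 < p)).card ≤ 2)} +
      Nat.card {l : n.Partition //
        l.evenCount = 2 ∧ (∀ p ∈ l.parts, p % 2 = 1 → p = 1) ∧ l.evenCount < l.oddCount} ≤
      Nat.card {l : n.Partition // l.evenCount < l.oddCount} := by
  refine (Nat.add_le_add_right ?_ _).trans (card_A_add_card_B_le_po_general n)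
  exact Nat.card_le_card_of_injective _ (Subtype.impEmbedding _ _ fun _ hl => hl.1).injective
end

section
/- For every even integer n with n ≥ 14, the number of partitions of n having exactly two even parts, all odd parts equal to 1, and more odd parts than even parts is strictly greater than the number of partitions λ of n such that the number of even parts exceeds the number of odd parts by exactly 1, the largest part is even, and at most two parts of λ are greater than 2. -/
/-! Call the partitions counted on the smaller side leftover. Let `k` be the number of odd parts of
a leftover partition of `n`; it is even because `n` is, so either `k = 0` and the partition is `n`
itself, or `k ≥ 2`. Suppose `k ≥ 2`. If all odd parts are `1`, keep the two largest even parts and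
split the other `k - 1` even parts, which are all `2`, into `1 + 1`. Otherwise the partition has
a single odd part `y > 1`, a single even part above `2`, and `k` parts `2`; split `y` into
`(y - 1) + 1` and each `2` into `1 + 1`. The result has two even parts and `3 * k - 2`, respectively
`3 * k`, ones, so the residue modulo `3` of the number of ones reveals which rule was applied, and
the splitting is injective.

No splitting yields `8` ones, so `(n - 10) + 2 + 1 + ⋯ + 1` is free to serve as the image of the
partition `n`. In the second rule the two even parts of the result are distinct. Hence the partition
`x + x + 1 + ⋯ + 1` with `x` even and `6` or `8` ones, as the residue of `n` modulo `4` dictates, is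
still missed: for `n ≥ 14` it has `x ≥ 4`. So the inequality is strict. -/

open Multiset

section Multisets

variable {α : Type*}

lemma filter_replicate_eq_ite (p : α → Prop) [DecidablePred p] (k : ℕ) (a : α) :
    (replicate k a).filter p = if p a then replicate k a else 0 := by
  split_ifs with ha
  · exact filter_eq_self.2 fun x hx ↦ eq_of_mem_replicate hx ▸ ha
  · exact filter_eq_nil.2 fun x hx ↦ eq_of_mem_replicate hx ▸ ha

lemma exists_pair_of_card_eq_two [LinearOrder α] {s : Multiset α} (hs : s.card = 2) :
    ∃ x y, y ≤ x ∧ s = {x, y} := by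
  obtain ⟨x, y, rfl⟩ := card_eq_two.1 hs
  rcases le_total y x with hyx | hxy
  · exact ⟨x, y, hyx, rfl⟩
  · exact ⟨y, x, hxy, pair_comm x y⟩

lemma pair_eq_pair_of_le [LinearOrder α] {x y x' y' : α} (hyx : y ≤ x) (hyx' : y' ≤ x')
    (h : ({x, y} : Multiset α) = {x', y'}) : x = x' ∧ y = y' := by
  have hmem : x ∈ ({x', y'} : Multiset α) := h ▸ mem_cons_self x {y}
  have hmem' : x' ∈ ({x, y} : Multiset α) := h ▸ mem_cons_self x' {y'}
  simp only [insert_eq_cons, mem_cons, mem_singleton] at hmem hmem'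
  obtain rfl : x = x' := by
    rcases hmem with hx | hx <;> rcases hmem' with hx' | hx' <;> order
  exact ⟨rfl, by simpa using h⟩

lemma sup_filter_lt_eq_sup [LinearOrder α] [OrderBot α] {s : Multiset α} {c : α}
    (hs : s.filter (c < ·) ≠ 0) : (s.filter (c < ·)).sup = s.sup := by
  obtain ⟨x, hx⟩ := exists_mem_of_ne_zero hs
  have hc : c ≤ (s.filter (c < ·)).sup := (mem_filter.1 hx).2.le.trans (le_sup hx)
  refine le_antisymm (sup_mono (filter_subset _ _)) (sup_le.2 fun y hy ↦ ?_)
  rcases le_or_gt y c with hyc | hcy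
  · exact hyc.trans hc
  · exact le_sup (mem_filter.2 ⟨hy, hcy⟩)

lemma eq_filter_two_lt_add_replicate {M : Multiset ℕ} (hM : 0 ∉ M) :
    M = M.filter (2 < ·) + replicate (M.count 1) 1 + replicate (M.count 2) 2 := by
  ext a
  have h0 : M.count 0 = 0 := count_eq_zero.2 hM
  simp only [count_add, count_filter, count_replicate]
  rcases Nat.lt_or_ge 2 a with ha | ha
  · simp [ha, show 1 ≠ a by omega, show 2 ≠ a by omega]
  · interval_cases a <;> simp [h0]

end Multisets

/-- The multisets of parts of leftover partitions, by the rule that splits them: a single even part;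
all odd parts equal to `1`, with `2 * x` and `2 * y` the two largest even parts; or an odd part
`2 * y + 1 > 1` below the only even part `2 * x > 2`. -/
inductive LeftoverShape : Multiset ℕ → Prop
  | single (x : ℕ) : LeftoverShape {2 * x}
  | oddPartsOne (x y k : ℕ) (hy : 1 ≤ y) (hyx : y ≤ x) :
      LeftoverShape ({2 * x, 2 * y} + replicate (k + 1) 1 + replicate k 2)
  | largeOddPart (x y k : ℕ) (hy : 1 ≤ y) (hyx : y < x) :
      LeftoverShape ({2 * x, 2 * y + 1} + replicate k 1 + replicate (k + 1) 2)

lemma leftoverShape_add_replicate {F : Multiset ℕ} {p q : ℕ} (hF : ∀ x ∈ F, 2 < x)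
    (hcard : (F.filter (· % 2 = 0)).card + q = (F.filter (· % 2 = 1)).card + p + 1)
    (hsup : F.sup % 2 = 0) (hlarge : F.card ≤ 2) :
    LeftoverShape (F + replicate p 1 + replicate q 2) := by
  obtain h | h | h : F.card = 0 ∨ F.card = 1 ∨ F.card = 2 := by omega
  · obtain rfl := card_eq_zero.1 h
    obtain rfl : q = p + 1 := by simpa using hcard
    cases p with
    | zero => simpa using LeftoverShape.single 1
    | succ k =>
      convert LeftoverShape.oddPartsOne 1 1 k le_rfl le_rfl using 1
      simp only [replicate_succ, insert_eq_cons, ← singleton_add]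
      abel
  · obtain ⟨x, rfl⟩ := card_eq_one.1 h
    have hx : 2 < x := hF x (by simp)
    have hx0 : x % 2 = 0 := by simpa using hsup
    obtain rfl : q = p := by simpa [filter_singleton, hx0, add_comm] using hcard
    obtain ⟨x, rfl⟩ := Nat.dvd_of_mod_eq_zero hx0
    cases q with
    | zero => simpa using LeftoverShape.single x
    | succ k =>
      convert LeftoverShape.oddPartsOne x 1 k le_rfl (by omega) using 1
      simp only [replicate_succ, insert_eq_cons, ← singleton_add]
      abel
  · obtain ⟨x, y, hyx, rfl⟩ := exists_pair_of_card_eq_two h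
    have hy : 2 < y := hF y (by simp)
    have hx0 : x % 2 = 0 := by simpa [hyx] using hsup
    obtain ⟨x, rfl⟩ := Nat.dvd_of_mod_eq_zero hx0
    obtain ⟨y, rfl | rfl⟩ := y.even_or_odd'
    · have hcount : 2 + q = p + 1 := by simpa [filter_singleton] using hcard
      obtain rfl : p = q + 1 := by omega
      exact .oddPartsOne x y q (by omega) (by omega)
    · have hy1 : (2 * y + 1) % 2 = 1 := by omega
      have hcount : 1 + q = 1 + p + 1 := by simpa [filter_singleton, hy1] using hcard
      obtain rfl : q = p + 1 := by omega
      exact .largeOddPart x y p (by omega) (by omega)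

lemma leftoverShape_of_card_eq {M : Multiset ℕ} (hM : 0 ∉ M)
    (hcard : (M.filter (· % 2 = 0)).card = (M.filter (· % 2 = 1)).card + 1)
    (hsup : M.sup % 2 = 0) (hlarge : (M.filter (2 < ·)).card ≤ 2) : LeftoverShape M := by
  have hsup' : (M.filter (2 < ·)).sup % 2 = 0 := by
    by_cases hF : M.filter (2 < ·) = 0
    · simp [hF]
    · rwa [sup_filter_lt_eq_sup hF]
  have hsplit := eq_filter_two_lt_add_replicate hM
  rw [hsplit] at hcard ⊢
  refine leftoverShape_add_replicate (fun x hx ↦ (mem_filter.1 hx).2) ?_ hsup' hlarge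
  simpa [-filter_filter, filter_replicate_eq_ite] using hcard

/-- The codes `(a, b, r)` of the partitions of `2 * m` into two even parts `2 * a ≥ 2 * b` and
`2 * r > 2` ones. -/
def splitCodes (m : ℕ) : Finset (ℕ × ℕ × ℕ) :=
  {t ∈ Finset.Iic (m, m, m) | t.1 + t.2.1 + t.2.2 = m ∧ 1 ≤ t.2.1 ∧ t.2.1 ≤ t.1 ∧ 2 ≤ t.2.2}

lemma mem_splitCodes {m a b r : ℕ} :
    (a, b, r) ∈ splitCodes m ↔ a + b + r = m ∧ 1 ≤ b ∧ b ≤ a ∧ 2 ≤ r := by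
  simp only [splitCodes, Finset.mem_filter, Finset.mem_Iic, Prod.mk_le_mk]
  omega

/-- The parts of the partition with code `(a, b, r)`. -/
def splitParts : ℕ × ℕ × ℕ → Multiset ℕ
  | (a, b, r) => {2 * a, 2 * b} + replicate (2 * r) 1

lemma splitParts_injOn : Set.InjOn splitParts {t | t.2.1 ≤ t.1} := by
  rintro ⟨a, b, r⟩ (hba : b ≤ a) ⟨a', b', r'⟩ (hba' : b' ≤ a') heq
  have hr : r = r' := by
    have hcount := congrArg (fun M ↦ (M.filter (· % 2 = 1)).card) heq
    simpa [splitParts, filter_replicate_eq_ite] using hcount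
  subst hr
  obtain ⟨ha, hb⟩ := pair_eq_pair_of_le (by omega) (by omega) (add_right_cancel heq)
  obtain rfl : a = a' := by omega
  obtain rfl : b = b' := by omega
  rfl

lemma exists_partition_parts_eq_splitParts {m : ℕ} {t : ℕ × ℕ × ℕ} (ht : t ∈ splitCodes m) :
    ∃ l : (2 * m).Partition,
      (l.evenCount = 2 ∧ (∀ p ∈ l.parts, p % 2 = 1 → p = 1) ∧ l.evenCount < l.oddCount) ∧
        l.parts = splitParts t := by
  obtain ⟨a, b, r⟩ := t
  obtain ⟨hsum, hb, hba, hr⟩ := mem_splitCodes.1 ht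
  have hmem {p : ℕ} (hp : p ∈ splitParts (a, b, r)) : p = 2 * a ∨ p = 2 * b ∨ p = 1 := by
    simp only [splitParts, insert_eq_cons, mem_add, mem_cons, mem_singleton, mem_replicate] at hp
    tauto
  let l : (2 * m).Partition :=
    { parts := splitParts (a, b, r)
      parts_pos := fun hp ↦ by have := hmem hp; omega
      parts_sum := by simp [splitParts]; omega }
  have heven : l.evenCount = 2 := by
    simp [l, Nat.Partition.evenCount, splitParts, filter_replicate_eq_ite]
  have hodd : l.oddCount = 2 * r := by
    simp [l, Nat.Partition.oddCount, splitParts, filter_replicate_eq_ite]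
  exact ⟨l, ⟨heven, fun p hp hp1 ↦ by have := hmem hp; omega, by omega⟩, rfl⟩

/-- The inverse of the splitting of leftover partitions, on codes. The last branch takes
the stand-in image of the partition `n` back to `n = 2 * (a + b + r)`. -/
def unsplitParts : ℕ × ℕ × ℕ → Multiset ℕ
  | (a, b, r) =>
    let k := 2 * ((r + 1) / 3)
    if r % 3 = 2 then {2 * a, 2 * b} + replicate k 1 + replicate (k - 1) 2
    else if r % 3 = 0 then {2 * a, 2 * b + 1} + replicate (k - 1) 1 + replicate k 2
    else {2 * (a + b + r)}

/-- A code missed by the splitting: two equal even parts and, according to the parity of `m`,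
`6` or `8` ones. -/
def missedCode (m : ℕ) : ℕ × ℕ × ℕ :=
  ((m - 3) / 2, (m - 3) / 2, m - 2 * ((m - 3) / 2))

lemma missedCode_mem_splitCodes {m : ℕ} (hm : 5 ≤ m) : missedCode m ∈ splitCodes m :=
  mem_splitCodes.2 (by omega)

lemma LeftoverShape.exists_unsplitParts_eq {m : ℕ} (hm : 7 ≤ m) {M : Multiset ℕ}
    (hM : LeftoverShape M) (hsum : M.sum = 2 * m) :
    ∃ t ∈ (splitCodes m).erase (missedCode m), unsplitParts t = M := by
  simp only [missedCode, Finset.mem_erase, Prod.exists, mem_splitCodes, ne_eq, Prod.mk.injEq]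
  cases hM with
  | single x =>
    obtain rfl : x = m := by simpa using hsum
    refine ⟨x - 5, 1, 4, by omega, ?_⟩
    have hx : x - 5 + 1 + 4 = x := by omega
    simp [unsplitParts, hx]
  | oddPartsOne x y k hy hyx =>
    have hsize : 2 * x + 2 * y + (k + 1) + 2 * k = 2 * m := by
      rw [← hsum]
      simp only [insert_eq_cons, sum_add, sum_cons, sum_singleton, sum_replicate, smul_eq_mul]
      ring
    obtain ⟨i, rfl⟩ : ∃ i, k = 2 * i + 1 := ⟨k / 2, by omega⟩
    refine ⟨x, y, 3 * i + 2, by omega, ?_⟩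
    have hi : (3 * i + 2 + 1) / 3 = i + 1 := by omega
    simp [unsplitParts, hi, mul_add]
  | largeOddPart x y k hy hyx =>
    have hsize : 2 * x + (2 * y + 1) + k + 2 * (k + 1) = 2 * m := by
      rw [← hsum]
      simp only [insert_eq_cons, sum_add, sum_cons, sum_singleton, sum_replicate, smul_eq_mul]
      ring
    obtain ⟨i, rfl⟩ : ∃ i, k = 2 * i + 1 := ⟨k / 2, by omega⟩
    refine ⟨x, y, 3 * i + 3, by omega, ?_⟩
    have hi : (3 * i + 3 + 1) / 3 = i + 1 := by omega
    simp [unsplitParts, hi, mul_add]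

lemma card_splitCodes_le (m : ℕ) :
    (splitCodes m).card ≤ Nat.card {l : (2 * m).Partition //
      l.evenCount = 2 ∧ (∀ p ∈ l.parts, p % 2 = 1 → p = 1) ∧ l.evenCount < l.oddCount} := by
  choose! l hl hparts using fun t (ht : t ∈ splitCodes m) ↦ exists_partition_parts_eq_splitParts ht
  rw [← Nat.card_eq_finsetCard]
  refine Nat.card_le_card_of_injective (fun t ↦ ⟨l t, hl t t.2⟩) fun t t' h ↦ ?_
  have hle (t : splitCodes m) : t.1.2.1 ≤ t.1.1 := (mem_splitCodes.1 t.2).2.2.1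
  refine Subtype.ext (splitParts_injOn (hle t) (hle t') ?_)
  rw [← hparts t t.2, ← hparts t' t'.2, Subtype.mk.inj h]

lemma card_leftover_le {m : ℕ} (hm : 7 ≤ m) :
    Nat.card {l : (2 * m).Partition //
      l.evenCount = l.oddCount + 1 ∧ l.parts.sup % 2 = 0 ∧
        (l.parts.filter (fun p => 2 < p)).card ≤ 2} ≤
      ((splitCodes m).erase (missedCode m)).card := by
  have hshape (l : {l : (2 * m).Partition //
      l.evenCount = l.oddCount + 1 ∧ l.parts.sup % 2 = 0 ∧
        (l.parts.filter (fun p => 2 < p)).card ≤ 2}) : LeftoverShape l.1.parts :=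
    leftoverShape_of_card_eq (fun h ↦ (l.1.parts_pos h).false) l.2.1 l.2.2.1 l.2.2.2
  choose t ht hparts using fun l ↦ (hshape l).exists_unsplitParts_eq hm l.1.parts_sum
  rw [← Nat.card_eq_finsetCard]
  refine Nat.card_le_card_of_injective (fun l ↦ ⟨t l, ht l⟩) fun l l' h ↦ ?_
  refine Subtype.ext (Nat.Partition.ext ?_)
  rw [← hparts l, ← hparts l', Subtype.mk.inj h]

/-- For every even integer `n ≥ 14`, the number of partitions of `n` having exactly two
even parts, all odd parts equal to `1`, and more odd parts than even parts is strictly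
greater than the number of partitions `λ` of `n` with the number of even parts exceeding
the number of odd parts by exactly `1`, largest part even, and at most two parts greater
than `2`. -/
theorem card_B_gt_card_leftover_even (n : ℕ) (hev : Even n) (hn : 14 ≤ n) :
    Nat.card {l : n.Partition //
        l.evenCount = 2 ∧ (∀ p ∈ l.parts, p % 2 = 1 → p = 1) ∧ l.evenCount < l.oddCount} >
      Nat.card {l : n.Partition //
        l.evenCount = l.oddCount + 1 ∧ l.parts.sup % 2 = 0 ∧
          (l.parts.filter (fun p => 2 < p)).card ≤ 2} := by
  obtain ⟨m, rfl⟩ := hev.two_dvd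
  have hm : 7 ≤ m := by omega
  calc
    _ ≤ ((splitCodes m).erase (missedCode m)).card := card_leftover_le hm
    _ < (splitCodes m).card :=
      Finset.card_erase_lt_of_mem (missedCode_mem_splitCodes (by omega))
    _ ≤ _ := card_splitCodes_le m
end
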